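/- An oriented graph is a global K-graph if and only if it is a local K-graph. -/

import Mathlib

namespace PluralCuts

/-- The two horizontal directions: west and east. -/
inductive XDir : Type
  | W
  | E
deriving DecidableEq

/-- The two vertical directions: north and south. -/
inductive YDir : Type
  | N
  | S
deriving DecidableEq

/-- The other element of `{W, E}`. -/
def XDir.other : XDir → XDir
  | .W => .E
  | .E => .W

/-- A helper choosing between two values according to an `XDir`. -/
def pick {α : Type*} (w e : α) : XDir → α
  | .W => w
  | .E => e

/-- A digraph on (a finite set of) natural-number vertices: a finite set of
vertices together with a finite set of edges (ordered pairs). -/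
structure DG : Type where
  verts : Finset ℕ
  edges : Finset (ℕ × ℕ)

namespace DG

/-- `D` is an oriented graph: edges lie between vertices, the edge relation is
irreflexive and antisymmetric, and the vertex set is nonempty. -/
def IsOriented (D : DG) : Prop :=
  (∀ e ∈ D.edges, e.1 ∈ D.verts ∧ e.2 ∈ D.verts) ∧
  (∀ e ∈ D.edges, e.1 ≠ e.2) ∧
  (∀ a b : ℕ, (a, b) ∈ D.edges → (b, a) ∉ D.edges) ∧
  D.verts.Nonempty

/-- A `W`-vertex: no edge ends in it. -/
def isWVert (D : DG) (a : ℕ) : Prop := a ∈ D.verts ∧ ∀ b, (b, a) ∉ D.edges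

/-- An `E`-vertex: no edge begins in it. -/
def isEVert (D : DG) (a : ℕ) : Prop := a ∈ D.verts ∧ ∀ b, (a, b) ∉ D.edges

/-- An inner vertex: some edge ends in it and some edge begins in it. -/
def isInner (D : DG) (a : ℕ) : Prop :=
  a ∈ D.verts ∧ (∃ b, (b, a) ∈ D.edges) ∧ (∃ b, (a, b) ∈ D.edges)

/-- A `W`-edge: an edge beginning in a `W`-vertex. -/
def isWEdge (D : DG) (e : ℕ × ℕ) : Prop := e ∈ D.edges ∧ D.isWVert e.1

/-- An `E`-edge: an edge ending in an `E`-vertex. -/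
def isEEdge (D : DG) (e : ℕ × ℕ) : Prop := e ∈ D.edges ∧ D.isEVert e.2

/-- An `X`-edge, for `X ∈ {W, E}`. -/
def isXEdge (D : DG) : XDir → (ℕ × ℕ) → Prop
  | .W => D.isWEdge
  | .E => D.isEEdge

/-- An inner edge: it begins and ends in inner vertices. -/
def isInnerEdge (D : DG) (e : ℕ × ℕ) : Prop :=
  e ∈ D.edges ∧ D.isInner e.1 ∧ D.isInner e.2

/-- A functional `W`-edge `(a,b)`: `(a,c) ∈ D` implies `b = c`. -/
def funcWEdge (D : DG) (e : ℕ × ℕ) : Prop :=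
  D.isWEdge e ∧ ∀ c, (e.1, c) ∈ D.edges → c = e.2

/-- A functional `E`-edge `(b,a)`: `(c,a) ∈ D` implies `b = c`. -/
def funcEEdge (D : DG) (e : ℕ × ℕ) : Prop :=
  D.isEEdge e ∧ ∀ c, (c, e.2) ∈ D.edges → c = e.1

/-- `D` is `W`-`E`-functional: all its `W`-edges and `E`-edges are functional. -/
def WEFunctional (D : DG) : Prop :=
  (∀ e, D.isWEdge e → D.funcWEdge e) ∧ (∀ e, D.isEEdge e → D.funcEEdge e)

/-- Semi-adjacency: `(a,b)` or `(b,a)` is an edge. -/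
def semiAdj (D : DG) (a b : ℕ) : Prop := (a, b) ∈ D.edges ∨ (b, a) ∈ D.edges

/-- A semipath: a nonempty sequence of mutually distinct vertices in which any
two consecutive vertices are semi-adjacent. -/
def IsSemipath (D : DG) (l : List ℕ) : Prop :=
  l ≠ [] ∧ (∀ a ∈ l, a ∈ D.verts) ∧ l.Nodup ∧ l.Chain' D.semiAdj

/-- A path: a nonempty sequence of mutually distinct vertices in which
`(a_i, a_{i+1})` is an edge for consecutive vertices. -/
def IsPath (D : DG) (l : List ℕ) : Prop :=
  l ≠ [] ∧ (∀ a ∈ l, a ∈ D.verts) ∧ l.Nodup ∧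
    l.Chain' (fun a b => (a, b) ∈ D.edges)

/-- A semicycle: a sequence `a_1, ..., a_n` of vertices with `n ≥ 4`,
`a_1 = a_n`, `a_1, ..., a_{n-1}` mutually distinct, and consecutive vertices
semi-adjacent. -/
def IsSemicycle (D : DG) (l : List ℕ) : Prop :=
  4 ≤ l.length ∧ (∀ a ∈ l, a ∈ D.verts) ∧ l.head? = l.getLast? ∧
  l.dropLast.Nodup ∧ l.Chain' D.semiAdj

/-- `D` is weakly connected: every two vertices are joined by a semipath. -/
def WeaklyConnected (D : DG) : Prop :=
  ∀ a ∈ D.verts, ∀ b ∈ D.verts,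
    ∃ l, D.IsSemipath l ∧ l.head? = some a ∧ l.getLast? = some b

/-- `D` is asemicyclic: it has no semicycles. -/
def Asemicyclic (D : DG) : Prop := ∀ l, ¬ D.IsSemicycle l

/-- The cut `D_W[e_W - e_E]D_E`:
`(D_W - {e_W}) ∪ (D_E - {e_E}) ∪ {(e_W.1, e_E.2)}` on the union of the vertex
sets with `e_W.2` and `e_E.1` omitted. -/
def cut (DW DE : DG) (eW eE : ℕ × ℕ) : DG where
  verts := (DW.verts ∪ DE.verts) \ {eW.2, eE.1}
  edges := insert (eW.1, eE.2) ((DW.edges.erase eW) ∪ (DE.edges.erase eE))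

end DG

/-- The type of assignments of four distinguished edges `NW, SW, NE, SE`. -/
abbrev DistE : Type := YDir → XDir → ℕ × ℕ

/-- The type of labellings assigning to (inner) vertices four edges. -/
abbrev Lab : Type := ℕ → YDir → XDir → ℕ × ℕ

/-- `⟨D, ε⟩` is a basic K-graph: `D` is an oriented graph with a single inner
vertex `b`, all edges begin or end in `b`, every other vertex is joined to `b`
by an edge, there is at least one edge ending in `b` and one beginning in `b`,
the distinguished edges `ε Y W` end in `b` and `ε Y E` begin in `b`, and
(XYB): if there are at least two `X`-edges then `NX ≠ SX`. -/
def IsBasicK (D : DG) (ε : DistE) : Prop :=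
  D.IsOriented ∧
  ∃ b ∈ D.verts,
    (∀ e ∈ D.edges, e.1 = b ∨ e.2 = b) ∧
    (∀ v ∈ D.verts, v = b ∨ (v, b) ∈ D.edges ∨ (b, v) ∈ D.edges) ∧
    (∃ a, (a, b) ∈ D.edges) ∧ (∃ c, (b, c) ∈ D.edges) ∧
    (∀ Y : YDir, ε Y XDir.W ∈ D.edges ∧ (ε Y XDir.W).2 = b ∧
      ε Y XDir.E ∈ D.edges ∧ (ε Y XDir.E).1 = b) ∧
    (2 ≤ (D.edges.filter (fun e => e.2 = b)).card →
      ε YDir.N XDir.W ≠ ε YDir.S XDir.W) ∧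
    (2 ≤ (D.edges.filter (fun e => e.1 = b)).card →
      ε YDir.N XDir.E ≠ ε YDir.S XDir.E)

/-- `⟨D, ε⟩` is a basic Q-graph: as a basic K-graph but with no requirement
(XYB) on the distinguished edges. -/
def IsBasicQ (D : DG) (ε : DistE) : Prop :=
  D.IsOriented ∧
  ∃ b ∈ D.verts,
    (∀ e ∈ D.edges, e.1 = b ∨ e.2 = b) ∧
    (∀ v ∈ D.verts, v = b ∨ (v, b) ∈ D.edges ∨ (b, v) ∈ D.edges) ∧
    (∃ a, (a, b) ∈ D.edges) ∧ (∃ c, (b, c) ∈ D.edges) ∧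
    (∀ Y : YDir, ε Y XDir.W ∈ D.edges ∧ (ε Y XDir.W).2 = b ∧
      ε Y XDir.E ∈ D.edges ∧ (ε Y XDir.E).1 = b)

/-- Finite binary trees whose nodes carry an oriented graph, four
distinguished edges, and (at internal nodes) the two cut edges. -/
inductive CTree : Type
  | leaf (D : DG) (ε : DistE)
  | node (D : DG) (ε : DistE) (eW eE : ℕ × ℕ) (l r : CTree)

namespace CTree

/-- The graph at the root of the tree. -/
def rootGraph : CTree → DG
  | .leaf D _ => D
  | .node D _ _ _ _ _ => D

/-- The distinguished edges at the root of the tree. -/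
def dist : CTree → DistE
  | .leaf _ ε => ε
  | .node _ ε _ _ _ _ => ε

/-- The list of graphs-with-distinguished-edges at the leaves of the tree
(the basic K-graphs determining the leaves of a construction). -/
def leaves : CTree → List (DG × DistE)
  | .leaf D ε => [(D, ε)]
  | .node _ _ _ _ l r => l.leaves ++ r.leaves

end CTree

/-- The tree `G_W[e_W - e_E]G_E`, whose root graph is the cut of the root
graphs and whose distinguished edges are given by (XYD). -/
def mkNode (GW GE : CTree) (eW eE : ℕ × ℕ) : CTree :=
  .node (DG.cut GW.rootGraph GE.rootGraph eW eE)
    (fun Y X =>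
      match X with
      | .W => if eE = GE.dist Y XDir.W then GW.dist Y XDir.W else GE.dist Y XDir.W
      | .E => if eW = GW.dist Y XDir.E then GE.dist Y XDir.E else GW.dist Y XDir.E)
    eW eE GW GE

/-- The inductive notion of construction (of a global K-graph). -/
inductive IsConstruction : CTree → Prop
  | leaf (D : DG) (ε : DistE) (h : IsBasicK D ε) : IsConstruction (.leaf D ε)
  | node (D : DG) (ε : DistE) (eW eE : ℕ × ℕ) (GW GE : CTree)
      (hW : IsConstruction GW) (hE : IsConstruction GE)
      (hdisj : Disjoint GW.rootGraph.verts GE.rootGraph.verts)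
      (heW : GW.rootGraph.funcEEdge eW)
      (heE : GE.rootGraph.funcWEdge eE)
      (hD : D = DG.cut GW.rootGraph GE.rootGraph eW eE)
      (hXYC : ∀ Y : YDir, eW = GW.dist Y XDir.E ∨ eE = GE.dist Y XDir.W)
      (hεW : ∀ Y : YDir, ε Y XDir.W =
        if eE = GE.dist Y XDir.W then GW.dist Y XDir.W else GE.dist Y XDir.W)
      (hεE : ∀ Y : YDir, ε Y XDir.E =
        if eW = GW.dist Y XDir.E then GE.dist Y XDir.E else GW.dist Y XDir.E) :
      IsConstruction (.node D ε eW eE GW GE)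

/-- The inductive notion of construction of a global Q-graph: as
`IsConstruction` but with basic Q-graphs at the leaves. -/
inductive IsConstructionQ : CTree → Prop
  | leaf (D : DG) (ε : DistE) (h : IsBasicQ D ε) : IsConstructionQ (.leaf D ε)
  | node (D : DG) (ε : DistE) (eW eE : ℕ × ℕ) (GW GE : CTree)
      (hW : IsConstructionQ GW) (hE : IsConstructionQ GE)
      (hdisj : Disjoint GW.rootGraph.verts GE.rootGraph.verts)
      (heW : GW.rootGraph.funcEEdge eW)
      (heE : GE.rootGraph.funcWEdge eE)
      (hD : D = DG.cut GW.rootGraph GE.rootGraph eW eE)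
      (hXYC : ∀ Y : YDir, eW = GW.dist Y XDir.E ∨ eE = GE.dist Y XDir.W)
      (hεW : ∀ Y : YDir, ε Y XDir.W =
        if eE = GE.dist Y XDir.W then GW.dist Y XDir.W else GE.dist Y XDir.W)
      (hεE : ∀ Y : YDir, ε Y XDir.E =
        if eW = GW.dist Y XDir.E then GE.dist Y XDir.E else GW.dist Y XDir.E) :
      IsConstructionQ (.node D ε eW eE GW GE)

/-- ρ-equivalence of constructions: the least equivalence relation containing
ρ1, ρ2, ρ3 and closed under congruence with respect to cuts. -/
inductive RhoEquiv : CTree → CTree → Prop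
  | rho1 (P Q R : CTree) (eW eE fW fE : ℕ × ℕ)
      (hP : IsConstruction P) (hQ : IsConstruction Q) (hR : IsConstruction R)
      (heW : P.rootGraph.isEEdge eW) (hfW : Q.rootGraph.isEEdge fW)
      (heE : Q.rootGraph.isWEdge eE) (hfE : R.rootGraph.isWEdge fE)
      (h1 : IsConstruction (mkNode (mkNode P Q eW eE) R fW fE))
      (h2 : IsConstruction (mkNode P (mkNode Q R fW fE) eW eE)) :
      RhoEquiv (mkNode (mkNode P Q eW eE) R fW fE)
               (mkNode P (mkNode Q R fW fE) eW eE)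
  | rho2 (P Q R : CTree) (eW eE fW fE : ℕ × ℕ)
      (hP : IsConstruction P) (hQ : IsConstruction Q) (hR : IsConstruction R)
      (heW : P.rootGraph.isEEdge eW) (hfW : P.rootGraph.isEEdge fW)
      (hne : eW ≠ fW)
      (heE : Q.rootGraph.isWEdge eE) (hfE : R.rootGraph.isWEdge fE)
      (h1 : IsConstruction (mkNode (mkNode P Q eW eE) R fW fE))
      (h2 : IsConstruction (mkNode (mkNode P R fW fE) Q eW eE)) :
      RhoEquiv (mkNode (mkNode P Q eW eE) R fW fE)
               (mkNode (mkNode P R fW fE) Q eW eE)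
  | rho3 (P Q R : CTree) (eW eE fW fE : ℕ × ℕ)
      (hP : IsConstruction P) (hQ : IsConstruction Q) (hR : IsConstruction R)
      (heE : P.rootGraph.isWEdge eE) (hfE : P.rootGraph.isWEdge fE)
      (hne : eE ≠ fE)
      (heW : Q.rootGraph.isEEdge eW) (hfW : R.rootGraph.isEEdge fW)
      (h1 : IsConstruction (mkNode R (mkNode Q P eW eE) fW fE))
      (h2 : IsConstruction (mkNode Q (mkNode R P fW fE) eW eE)) :
      RhoEquiv (mkNode R (mkNode Q P eW eE) fW fE)
               (mkNode Q (mkNode R P fW fE) eW eE)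
  | congr (G1 G2 H1 H2 : CTree) (eW eE : ℕ × ℕ)
      (h12 : RhoEquiv G1 G2) (h34 : RhoEquiv H1 H2)
      (hc1 : IsConstruction (mkNode G1 H1 eW eE))
      (hc2 : IsConstruction (mkNode G2 H2 eW eE)) :
      RhoEquiv (mkNode G1 H1 eW eE) (mkNode G2 H2 eW eE)
  | refl (G : CTree) (h : IsConstruction G) : RhoEquiv G G
  | symm {G H : CTree} (h : RhoEquiv G H) : RhoEquiv H G
  | trans {G H K : CTree} (h1 : RhoEquiv G H) (h2 : RhoEquiv H K) :
      RhoEquiv G K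

/-- The class `[G]`: all constructions with the same root graph as `G` whose
leaves are determined by the same basic K-graphs as those of `G`. -/
def classOf (G : CTree) : Set CTree :=
  {H | IsConstruction H ∧ H.rootGraph = G.rootGraph ∧
    ∀ p : DG × DistE, p ∈ H.leaves ↔ p ∈ G.leaves}

/-- Renaming the vertices of a digraph along a function. -/
def DG.rename (f : ℕ → ℕ) (D : DG) : DG where
  verts := D.verts.image f
  edges := D.edges.image (fun e => (f e.1, f e.2))

/-- Renaming the vertices throughout a tree. -/
def CTree.rename (f : ℕ → ℕ) : CTree → CTree
  | .leaf D ε => .leaf (DG.rename f D) (fun Y X => (f (ε Y X).1, f (ε Y X).2))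
  | .node D ε eW eE l r =>
      .node (DG.rename f D) (fun Y X => (f (ε Y X).1, f (ε Y X).2))
        (f eW.1, f eW.2) (f eE.1, f eE.2) (l.rename f) (r.rename f)

/-- σ-equivalence: `H` is obtained from `G` by a bijective renaming of
vertices that fixes the root vertices (so only secondary vertices may be
renamed). -/
def SigmaEquiv (G H : CTree) : Prop :=
  ∃ f : ℕ ≃ ℕ, (∀ v ∈ G.rootGraph.verts, f v = v) ∧ H = G.rename f

/-- The global compass graph `‖G‖`: all constructions σ-equivalent to a
construction in `[G]`. -/
def normClass (G : CTree) : Set CTree :=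
  {H | ∃ K ∈ classOf G, SigmaEquiv K H}

/-- The labelling `L` of `λ(G) = ⟨D, L⟩`, defined by induction on `G`: at a
leaf given by a basic K-graph with inner vertex `b`, `YX(b) = YX(B)`; at a
node, the value is inherited from the appropriate subtree unless it is one of
the two cut edges, in which case it is the new edge introduced by the cut. -/
def lamG : CTree → Lab
  | .leaf _ ε => fun _ => ε
  | .node _ _ eW eE l r => fun a Y X =>
      let v := if a ∈ l.rootGraph.verts then lamG l a Y X else lamG r a Y X
      if v = eW ∨ v = eE then (eW.1, eE.2) else v

/-- `L` assigns to every inner vertex `a` edges `L a Y W` ending in `a` and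
edges `L a Y E` beginning in `a`. -/
def ProperLab (D : DG) (L : Lab) : Prop :=
  ∀ a, D.isInner a → ∀ Y : YDir,
    L a Y XDir.W ∈ D.edges ∧ (L a Y XDir.W).2 = a ∧
    L a Y XDir.E ∈ D.edges ∧ (L a Y XDir.E).1 = a

/-- `⟨D, L⟩` separates `N` from `S`. -/
def SeparatesNS (D : DG) (L : Lab) : Prop :=
  ∀ a, D.isInner a →
    (2 ≤ (D.edges.filter (fun e => e.2 = a)).card →
      L a YDir.N XDir.W ≠ L a YDir.S XDir.W) ∧
    (2 ≤ (D.edges.filter (fun e => e.1 = a)).card →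
      L a YDir.N XDir.E ≠ L a YDir.S XDir.E)

/-- A list `a_1, ..., a_n` is `Y`-decent in `⟨D, L⟩`: `n = 1`, or
`YE(a_1) = (a_1, a_2)`, or `YW(a_n) = (a_{n-1}, a_n)`. -/
def Ydecent (L : Lab) (Y : YDir) (l : List ℕ) : Prop :=
  ∀ a b t, l = a :: b :: t →
    (L a Y XDir.E = (a, b) ∨
      ∃ c d t', l.reverse = d :: c :: t' ∧ L d Y XDir.W = (c, d))

/-- `⟨D, L⟩` is a local compass graph. -/
def IsLocalCompass (D : DG) (L : Lab) : Prop :=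
  D.IsOriented ∧ ProperLab D L ∧
  D.WeaklyConnected ∧ D.Asemicyclic ∧ D.WEFunctional ∧ (∃ a, D.isInner a) ∧
  SeparatesNS D L ∧
  (∀ l, D.IsPath l → Ydecent L YDir.N l ∧ Ydecent L YDir.S l)

/-- A path (list) covers an edge `g` when `g` is a pair of consecutive
vertices of the list. -/
def covers (l : List ℕ) (g : ℕ × ℕ) : Prop := g ∈ l.zip l.tail

/-- A `YX`-edge in `⟨D, L⟩`. -/
def YXedge (D : DG) (L : Lab) (Y : YDir) : XDir → (ℕ × ℕ) → Prop
  | .W, g => g ∈ D.edges ∧ (L g.2 Y XDir.W = g ∨ D.isEEdge g)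
  | .E, g => g ∈ D.edges ∧ (L g.1 Y XDir.E = g ∨ D.isWEdge g)

/-- A proper semipath: a semipath such that neither it nor its reverse is a
path. -/
def ProperSemipath (D : DG) (l : List ℕ) : Prop :=
  D.IsSemipath l ∧ ¬ D.IsPath l ∧ ¬ D.IsPath l.reverse

/-- A transversal edge `(a,b)`: there is a proper semipath beginning with
`a, b` and a proper semipath beginning with `b, a`. -/
def Transversal (D : DG) (e : ℕ × ℕ) : Prop :=
  e ∈ D.edges ∧
  (∃ t, ProperSemipath D (e.1 :: e.2 :: t)) ∧
  (∃ t, ProperSemipath D (e.2 :: e.1 :: t))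

/-- The edge of `D` that connects two semi-adjacent vertices `a` and `b`. -/
def connEdge (D : DG) (a b : ℕ) : ℕ × ℕ :=
  if (a, b) ∈ D.edges then (a, b) else (b, a)

/-- The connecting edges of a list: the edges connecting its consecutive
vertices. -/
def connEdges (D : DG) (l : List ℕ) (e : ℕ × ℕ) : Prop :=
  ∃ p ∈ l.zip l.tail, e = connEdge D p.1 p.2

/-- A bifurcation: three distinct edges with a common vertex. -/
def Bifurcation (D : DG) (e1 e2 e3 : ℕ × ℕ) : Prop :=
  e1 ∈ D.edges ∧ e2 ∈ D.edges ∧ e3 ∈ D.edges ∧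
  e1 ≠ e2 ∧ e1 ≠ e3 ∧ e2 ≠ e3 ∧
  ∃ v, (v = e1.1 ∨ v = e1.2) ∧ (v = e2.1 ∨ v = e2.2) ∧ (v = e3.1 ∨ v = e3.2)

/-- A K-graph: a weakly connected, asemicyclic, `W`-`E`-functional oriented
graph with an inner vertex in which no bifurcation is transversal. -/
def IsKGraph (D : DG) : Prop :=
  D.IsOriented ∧ D.WeaklyConnected ∧ D.Asemicyclic ∧ D.WEFunctional ∧
  (∃ a, D.isInner a) ∧
  ∀ e1 e2 e3, Bifurcation D e1 e2 e3 →
    ¬ (Transversal D e1 ∧ Transversal D e2 ∧ Transversal D e3)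

/-- A Q-graph: a weakly connected, asemicyclic, `W`-`E`-functional oriented
graph with an inner vertex. -/
def IsQGraph (D : DG) : Prop :=
  D.IsOriented ∧ D.WeaklyConnected ∧ D.Asemicyclic ∧ D.WEFunctional ∧
  ∃ a, D.isInner a



/-- Inner vertices, stated through edges. -/
def Inn (D : DG) (a : ℕ) : Prop := (∃ e ∈ D.edges, e.2 = a) ∧ (∃ e ∈ D.edges, e.1 = a)

/-- Directed reachability between edges. -/
def Rch (D : DG) : ℕ × ℕ → ℕ × ℕ → Prop :=
  Relation.ReflTransGen (fun e f => e.2 = f.1 ∧ f ∈ D.edges)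

/-- Set-theoretic (walk-free) reformulation of local compass graphs. -/
structure Core (D : DG) (L : Lab) : Prop where
  ori : D.IsOriented
  conn : ∀ S : Set ℕ, (∀ e ∈ D.edges, e.1 ∈ S ↔ e.2 ∈ S) →
    ∀ x ∈ D.verts, ∀ y ∈ D.verts, x ∈ S → y ∈ S
  tree : ∀ e ∈ D.edges, ∃ S : Set ℕ, e.1 ∈ S ∧ e.2 ∉ S ∧
    ∀ f ∈ D.edges, f ≠ e → (f.1 ∈ S ↔ f.2 ∈ S)
  fW : ∀ e ∈ D.edges, ∀ f ∈ D.edges, e.1 = f.1 → e ≠ f → ∃ g ∈ D.edges, g.2 = e.1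
  fE : ∀ e ∈ D.edges, ∀ f ∈ D.edges, e.2 = f.2 → e ≠ f → ∃ g ∈ D.edges, g.1 = e.2
  inn : ∃ a, Inn D a
  prop : ∀ a, Inn D a → ∀ Y : YDir,
    L a Y XDir.W ∈ D.edges ∧ (L a Y XDir.W).2 = a ∧
    L a Y XDir.E ∈ D.edges ∧ (L a Y XDir.E).1 = a
  sW : ∀ a, Inn D a → L a YDir.N XDir.W = L a YDir.S XDir.W →
    ∀ e ∈ D.edges, e.2 = a → e = L a YDir.N XDir.W
  sE : ∀ a, Inn D a → L a YDir.N XDir.E = L a YDir.S XDir.E →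
    ∀ e ∈ D.edges, e.1 = a → e = L a YDir.N XDir.E
  dec : ∀ Y e f, e ∈ D.edges → f ∈ D.edges → Rch D e f → Inn D e.1 → Inn D f.2 →
    L e.1 Y XDir.E = e ∨ L f.2 Y XDir.W = f

/-- The invariant characterizing the distinguished edges of a construction. -/
structure Inv (D : DG) (L : Lab) (ε : DistE) : Prop where
  eW : ∀ Y, ε Y XDir.W ∈ D.edges ∧ (∀ e ∈ D.edges, e.2 ≠ (ε Y XDir.W).1) ∧
    Inn D (ε Y XDir.W).2
  eE : ∀ Y, ε Y XDir.E ∈ D.edges ∧ (∀ e ∈ D.edges, e.1 ≠ (ε Y XDir.E).2) ∧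
    Inn D (ε Y XDir.E).1
  oneE : ∀ Y, ∀ e ∈ D.edges, Inn D e.1 → Rch D e (ε Y XDir.E) → L e.1 Y XDir.E = e
  oneW : ∀ Y, ∀ e ∈ D.edges, Inn D e.2 → Rch D (ε Y XDir.W) e → L e.2 Y XDir.W = e
  twoE : ∀ Y, ∀ f ∈ D.edges, (∀ e ∈ D.edges, e.1 ≠ f.2) → f ≠ ε Y XDir.E →
    ∃ e ∈ D.edges, Inn D e.1 ∧ Rch D e f ∧ L e.1 Y XDir.E ≠ e
  twoW : ∀ Y, ∀ f ∈ D.edges, (∀ e ∈ D.edges, e.2 ≠ f.1) → f ≠ ε Y XDir.W →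
    ∃ e ∈ D.edges, Inn D e.2 ∧ Rch D f e ∧ L e.2 Y XDir.W ≠ e
  three : ∀ Y, Rch D (ε Y XDir.W) (ε Y XDir.E)

/-- The data of a cut. -/
structure JD (A B : DG) (u v : ℕ × ℕ) : Prop where
  a1 : ∀ e ∈ A.edges, e.1 ∈ A.verts ∧ e.2 ∈ A.verts
  b1 : ∀ e ∈ B.edges, e.1 ∈ B.verts ∧ e.2 ∈ B.verts
  oA : A.IsOriented
  oB : B.IsOriented
  disj : ∀ x, x ∈ A.verts → x ∈ B.verts → False
  uA : u ∈ A.edges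
  u1 : ∀ e ∈ A.edges, e.1 ≠ u.2
  u2 : ∀ e ∈ A.edges, e.2 = u.2 → e = u
  vB : v ∈ B.edges
  v1 : ∀ e ∈ B.edges, e.2 ≠ v.1
  v2 : ∀ e ∈ B.edges, e.1 = v.1 → e = v

/-- The image of an edge under a cut. -/
def mp (u v e : ℕ × ℕ) : ℕ × ℕ := if e = u ∨ e = v then (u.1, v.2) else e

theorem mem_cut {A B : DG} {u v p : ℕ × ℕ} : p ∈ (DG.cut A B u v).edges ↔
    p = (u.1, v.2) ∨ (p ∈ A.edges ∧ p ≠ u) ∨ (p ∈ B.edges ∧ p ≠ v) := by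
  simp [DG.cut]; tauto

theorem vmem_cut {A B : DG} {u v : ℕ × ℕ} (h : JD A B u v) {x : ℕ} :
    x ∈ (DG.cut A B u v).verts ↔
    (x ∈ A.verts ∧ x ≠ u.2) ∨ (x ∈ B.verts ∧ x ≠ v.1) := by
  have h1 := h.disj x
  have h2 := h.a1 u h.uA
  have h3 := h.b1 v h.vB
  simp [DG.cut]
  grind

theorem JD.memW {A B : DG} {u v : ℕ × ℕ} (h : JD A B u v) {p : ℕ × ℕ}
    (hp : p ∈ (DG.cut A B u v).edges) :
    (∃ e ∈ A.edges, p = mp u v e ∧ p.1 = e.1) ∨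
      (∃ e ∈ B.edges, e ≠ v ∧ p = mp u v e ∧ p = e) := by
  have := h.a1 u h.uA
  have := h.b1 v h.vB
  have := h.disj
  rw [mem_cut] at hp
  rcases hp with rfl | hp | hp
  · left; exact ⟨u, h.uA, by simp [mp]⟩
  · left; refine ⟨p, hp.1, ?_, rfl⟩
    have := h.a1 p hp.1
    grind [mp]
  · right; refine ⟨p, hp.1, hp.2, ?_, rfl⟩
    have := h.b1 p hp.1
    grind [mp]

theorem JD.mapA {A B : DG} {u v : ℕ × ℕ} (h : JD A B u v) {e : ℕ × ℕ}
    (he : e ∈ A.edges) : mp u v e ∈ (DG.cut A B u v).edges ∧ (mp u v e).1 = e.1 ∧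
      (e ≠ u → mp u v e = e) := by
  have := h.a1 e he
  have := h.b1 v h.vB
  have := h.disj
  rw [mem_cut]
  grind [mp]

theorem JD.mapB {A B : DG} {u v : ℕ × ℕ} (h : JD A B u v) {e : ℕ × ℕ}
    (he : e ∈ B.edges) : mp u v e ∈ (DG.cut A B u v).edges ∧ (mp u v e).2 = e.2 ∧
      (e ≠ v → mp u v e = e) := by
  have := h.b1 e he
  have := h.a1 u h.uA
  have := h.disj
  rw [mem_cut]
  grind [mp]

theorem JD.injA {A B : DG} {u v : ℕ × ℕ} (h : JD A B u v) {e f : ℕ × ℕ}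
    (he : e ∈ A.edges) (hf : f ∈ A.edges) (hh : mp u v e = mp u v f) : e = f := by
  have := h.a1 e he
  have := h.a1 f hf
  have := h.b1 v h.vB
  have := h.disj
  grind [mp]

theorem JD.injB {A B : DG} {u v : ℕ × ℕ} (h : JD A B u v) {e f : ℕ × ℕ}
    (he : e ∈ B.edges) (hf : f ∈ B.edges) (hh : mp u v e = mp u v f) : e = f := by
  have := h.b1 e he
  have := h.b1 f hf
  have := h.a1 u h.uA
  have := h.disj
  grind [mp]

theorem JD.innA {A B : DG} {u v : ℕ × ℕ} (h : JD A B u v) {x : ℕ} (hx : x ∈ A.verts) :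
    Inn (DG.cut A B u v) x ↔ Inn A x := by
  have := h.b1 v h.vB
  have := h.disj
  constructor
  · rintro ⟨⟨e, he, rfl⟩, ⟨f, hf, hf'⟩⟩
    rw [mem_cut] at he hf
    refine ⟨?_, ?_⟩
    · refine ⟨e, ?_, rfl⟩
      have := h.b1 e
      grind
    · have := h.b1 f
      have := h.uA
      grind
  · rintro ⟨⟨e, he, rfl⟩, ⟨f, hf, hf'⟩⟩
    have h1 := h.u1 f hf
    refine ⟨⟨e, ?_, rfl⟩, ⟨mp u v f, (h.mapA hf).1, ?_⟩⟩
    · rw [mem_cut]; grind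
    · rw [(h.mapA hf).2.1, hf']

theorem JD.innB {A B : DG} {u v : ℕ × ℕ} (h : JD A B u v) {x : ℕ} (hx : x ∈ B.verts) :
    Inn (DG.cut A B u v) x ↔ Inn B x := by
  have := h.a1 u h.uA
  have := h.disj
  constructor
  · rintro ⟨⟨e, he, hf'⟩, ⟨f, hf, rfl⟩⟩
    rw [mem_cut] at he hf
    refine ⟨?_, ?_⟩
    · have := h.a1 e
      have := h.vB
      grind
    · refine ⟨f, ?_, rfl⟩
      have := h.a1 f
      grind
  · rintro ⟨⟨e, he, hf'⟩, ⟨f, hf, rfl⟩⟩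
    have h1 := h.v1 e he
    refine ⟨⟨mp u v e, (h.mapB he).1, ?_⟩, ⟨f, ?_, rfl⟩⟩
    · rw [(h.mapB he).2.1, hf']
    · rw [mem_cut]; grind

theorem inn_mem {D : DG} (h : ∀ e ∈ D.edges, e.1 ∈ D.verts ∧ e.2 ∈ D.verts) {x : ℕ}
    (hx : Inn D x) : x ∈ D.verts := by
  obtain ⟨⟨e, he, rfl⟩, _⟩ := hx
  exact (h e he).2

theorem JD.innU {A B : DG} {u v : ℕ × ℕ} (h : JD A B u v) : ¬ Inn A u.2 := by
  rintro ⟨_, ⟨f, hf, hf'⟩⟩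
  exact h.u1 f hf hf'

theorem JD.innV {A B : DG} {u v : ℕ × ℕ} (h : JD A B u v) : ¬ Inn B v.1 := by
  rintro ⟨⟨f, hf, hf'⟩, _⟩
  exact h.v1 f hf hf'

theorem JD.rchA {A B : DG} {u v : ℕ × ℕ} (h : JD A B u v) {e f : ℕ × ℕ}
    (he : e ∈ A.edges) (hr : Rch A e f) :
    f ∈ A.edges ∧ Rch (DG.cut A B u v) (mp u v e) (mp u v f) := by
  induction hr with
  | refl => exact ⟨he, Relation.ReflTransGen.refl⟩
  | @tail b c _ hbc ih =>
    refine ⟨hbc.2, ih.2.tail ⟨?_, (h.mapA hbc.2).1⟩⟩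
    have hb : b ≠ u := by
      rintro rfl
      exact h.u1 c hbc.2 hbc.1.symm
    rw [(h.mapA hbc.2).2.1, (h.mapA ih.1).2.2 hb, hbc.1]

theorem JD.rchB {A B : DG} {u v : ℕ × ℕ} (h : JD A B u v) {e f : ℕ × ℕ}
    (he : e ∈ B.edges) (hr : Rch B e f) :
    f ∈ B.edges ∧ Rch (DG.cut A B u v) (mp u v e) (mp u v f) := by
  induction hr with
  | refl => exact ⟨he, Relation.ReflTransGen.refl⟩
  | @tail b c _ hbc ih =>
    refine ⟨hbc.2, ih.2.tail ⟨?_, (h.mapB hbc.2).1⟩⟩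
    have hc : c ≠ v := by
      rintro rfl
      exact h.v1 b ih.1 hbc.1
    rw [(h.mapB ih.1).2.1, (h.mapB hbc.2).2.2 hc, hbc.1]

theorem JD.rch {A B : DG} {u v : ℕ × ℕ} (h : JD A B u v) {p q : ℕ × ℕ}
    (hp : p ∈ (DG.cut A B u v).edges) (hr : Rch (DG.cut A B u v) p q) :
    ∃ e f, p = mp u v e ∧ q = mp u v f ∧
      ((e ∈ A.edges ∧ f ∈ A.edges ∧ Rch A e f) ∨
       (e ∈ B.edges ∧ f ∈ B.edges ∧ Rch B e f) ∨
       (e ∈ A.edges ∧ f ∈ B.edges ∧ Rch A e u ∧ Rch B v f)) := by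
  have huA := h.a1 u h.uA
  have hvB := h.b1 v h.vB
  have hd := h.disj
  induction hr with
  | refl =>
    rcases h.memW hp with ⟨e, he, h1, _⟩ | ⟨e, he, _, h1, _⟩
    · exact ⟨e, e, h1, h1, Or.inl ⟨he, he, Relation.ReflTransGen.refl⟩⟩
    · exact ⟨e, e, h1, h1, Or.inr (Or.inl ⟨he, he, Relation.ReflTransGen.refl⟩)⟩
  | @tail q r _ hqr ih =>
    obtain ⟨hqr, hr⟩ := hqr
    obtain ⟨e, f, h1, h2, h3⟩ := ih
    have key : f ∈ B.edges → ∃ g ∈ B.edges, r = mp u v g ∧ f.2 = g.1 := by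
      intro hf
      have hfB := h.b1 f hf
      rcases h.memW hr with ⟨g, hg, h4, h5⟩ | ⟨g, hg, _, h4, h5⟩
      · have := h.a1 g hg
        have := (h.mapB hf).2.1
        grind
      · refine ⟨g, hg, h4, ?_⟩
        have := (h.mapB hf).2.1
        grind
    rcases h3 with ⟨he, hf, h3⟩ | ⟨he, hf, h3⟩ | ⟨he, hf, h3, h3'⟩
    · by_cases hfu : f = u
      · subst hfu
        rcases h.memW hr with ⟨g, hg, h4, h5⟩ | ⟨g, hg, hgv, h4, h5⟩
        · have := h.a1 g hg
          grind [mp]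
        · refine ⟨e, g, h1, h4, Or.inr (Or.inr ⟨he, hg, h3, ?_⟩)⟩
          refine Relation.ReflTransGen.single ⟨?_, hg⟩
          grind [mp]
      · have hfA := h.a1 f hf
        have := (h.mapA hf).2.2 hfu
        rcases h.memW hr with ⟨g, hg, h4, h5⟩ | ⟨g, hg, hgv, h4, h5⟩
        · refine ⟨e, g, h1, h4, Or.inl ⟨he, hg, h3.tail ⟨?_, hg⟩⟩⟩
          grind
        · have := h.b1 g hg
          grind
    · obtain ⟨g, hg, h4, h5⟩ := key hf
      exact ⟨e, g, h1, h4, Or.inr (Or.inl ⟨he, hg, h3.tail ⟨h5, hg⟩⟩)⟩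
    · obtain ⟨g, hg, h4, h5⟩ := key hf
      exact ⟨e, g, h1, h4, Or.inr (Or.inr ⟨he, hg, h3, h3'.tail ⟨h5, hg⟩⟩)⟩

theorem JD.ori {A B : DG} {u v : ℕ × ℕ} (h : JD A B u v) :
    (DG.cut A B u v).IsOriented := by
  have huA := h.a1 u h.uA
  have hvB := h.b1 v h.vB
  have hd := h.disj
  obtain ⟨hA1, hA2, hA3, hA4⟩ := h.oA
  obtain ⟨hB1, hB2, hB3, hB4⟩ := h.oB
  have hu1 := h.u1
  have hu2 := h.u2
  have hv1 := h.v1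
  have hv2 := h.v2
  refine ⟨?_, ?_, ?_, ?_⟩
  · intro e he
    rw [vmem_cut h, vmem_cut h]
    rw [mem_cut] at he
    have := hu1 u h.uA
    have := hv1 v h.vB
    rcases he with rfl | ⟨he, he'⟩ | ⟨he, he'⟩
    · grind
    · have := hA1 e he
      have := hu1 e he
      have := hu2 e he
      grind
    · have := hB1 e he
      have := hv1 e he
      have := hv2 e he
      grind
  · intro e he
    rw [mem_cut] at he
    have := hA2 e
    have := hB2 e
    grind
  · intro a b h1 h2
    rw [mem_cut] at h1 h2
    have := hA3 a b
    have := hB3 a b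
    have := hA1 (a, b)
    have := hB1 (a, b)
    have := hA1 (b, a)
    have := hB1 (b, a)
    grind
  · refine ⟨u.1, ?_⟩
    rw [vmem_cut h]
    exact Or.inl ⟨huA.1, h.u1 u h.uA⟩

theorem JD.conn {A B : DG} {u v : ℕ × ℕ} (h : JD A B u v) {LA LB : Lab}
    (cA : Core A LA) (cB : Core B LB) (S : Set ℕ)
    (hS : ∀ e ∈ (DG.cut A B u v).edges, e.1 ∈ S ↔ e.2 ∈ S) :
    ∀ x ∈ (DG.cut A B u v).verts, ∀ y ∈ (DG.cut A B u v).verts, x ∈ S → y ∈ S := by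
  have huA := h.a1 u h.uA
  have hvB := h.b1 v h.vB
  have hd := h.disj
  have h0 := hS (u.1, v.2) (mem_cut.2 (Or.inl rfl))
  have hA := cA.conn {x | (x ≠ u.2 ∧ x ∈ S) ∨ (x = u.2 ∧ u.1 ∈ S)} (by
    intro e he
    have h1 := h.u1 e he
    have h2 := h.u2 e he
    by_cases heu : e = u
    · subst heu; simp; tauto
    · have h3 := hS e (mem_cut.2 (Or.inr (Or.inl ⟨he, heu⟩)))
      simp only [Set.mem_setOf_eq]; grind)
  have hB := cB.conn {x | (x ≠ v.1 ∧ x ∈ S) ∨ (x = v.1 ∧ v.2 ∈ S)} (by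
    intro e he
    have h1 := h.v1 e he
    have h2 := h.v2 e he
    by_cases heu : e = v
    · subst heu; simp; tauto
    · have h3 := hS e (mem_cut.2 (Or.inr (Or.inr ⟨he, heu⟩)))
      simp only [Set.mem_setOf_eq]; grind)
  simp only [Set.mem_setOf_eq] at hA hB h0
  have hu := h.u1 u h.uA
  have hv := h.v1 v h.vB
  intro x hx y hy hxS
  rw [vmem_cut h] at hx hy
  rcases hx with ⟨hx, hx'⟩ | ⟨hx, hx'⟩ <;> rcases hy with ⟨hy, hy'⟩ | ⟨hy, hy'⟩
  · have := hA x hx y hy; grind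
  · have := hA x hx u.1 huA.1
    have := hB v.2 hvB.2 y hy
    grind
  · have := hB x hx v.2 hvB.2
    have := hA u.1 huA.1 y hy
    grind
  · have := hB x hx y hy; grind

theorem JD.tree {A B : DG} {u v : ℕ × ℕ} (h : JD A B u v) {LA LB : Lab}
    (cA : Core A LA) (cB : Core B LB) :
    ∀ e ∈ (DG.cut A B u v).edges, ∃ S : Set ℕ, e.1 ∈ S ∧ e.2 ∉ S ∧
    ∀ f ∈ (DG.cut A B u v).edges, f ≠ e → (f.1 ∈ S ↔ f.2 ∈ S) := by
  have huA := h.a1 u h.uA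
  have hvB := h.b1 v h.vB
  have hd := h.disj
  intro e he
  rw [mem_cut] at he
  rcases he with rfl | ⟨he, he'⟩ | ⟨he, he'⟩
  · refine ⟨{x | x ∈ A.verts}, huA.1, fun h' => hd _ h' hvB.2, ?_⟩
    intro f hf hne
    rw [mem_cut] at hf
    have := h.a1 f
    have := h.b1 f
    simp only [Set.mem_setOf_eq]
    grind
  · obtain ⟨S, h1, h2, h3⟩ := cA.tree e he
    have he2 := h.a1 e he
    refine ⟨{x | (x ∈ A.verts ∧ x ∈ S) ∨ (x ∈ B.verts ∧ u.1 ∈ S)}, ?_, ?_, ?_⟩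
    · simp only [Set.mem_setOf_eq]; grind
    · simp only [Set.mem_setOf_eq]; grind
    · intro f hf hne
      rw [mem_cut] at hf
      have := h.a1 f
      have := h.b1 f
      have := h3 f
      simp only [Set.mem_setOf_eq]
      grind
  · obtain ⟨S, h1, h2, h3⟩ := cB.tree e he
    have he2 := h.b1 e he
    refine ⟨{x | (x ∈ B.verts ∧ x ∈ S) ∨ (x ∈ A.verts ∧ v.2 ∈ S)}, ?_, ?_, ?_⟩
    · simp only [Set.mem_setOf_eq]; grind
    · simp only [Set.mem_setOf_eq]; grind
    · intro f hf hne
      rw [mem_cut] at hf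
      have := h.a1 f
      have := h.b1 f
      have := h3 f
      simp only [Set.mem_setOf_eq]
      grind

theorem JD.innCases {A B : DG} {u v : ℕ × ℕ} (h : JD A B u v) {x : ℕ}
    (hx : Inn (DG.cut A B u v) x) : (x ∈ A.verts ∧ Inn A x) ∨ (x ∈ B.verts ∧ Inn B x) := by
  have h1 := inn_mem h.ori.1 hx
  rw [vmem_cut h] at h1
  rcases h1 with h1 | h1
  · exact Or.inl ⟨h1.1, (h.innA h1.1).1 hx⟩
  · exact Or.inr ⟨h1.1, (h.innB h1.1).1 hx⟩

/-- every edge of the cut ending in a vertex of `A` comes from `A`, etc. -/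
theorem JD.fromA {A B : DG} {u v : ℕ × ℕ} (h : JD A B u v) {p : ℕ × ℕ}
    (hp : p ∈ (DG.cut A B u v).edges) (hx : p.1 ∈ A.verts) :
    ∃ e ∈ A.edges, p = mp u v e ∧ p.1 = e.1 := by
  rcases h.memW hp with h1 | ⟨e, he, _, _, h1⟩
  · exact h1
  · subst h1
    exact (h.disj _ hx (h.b1 p he).1).elim

theorem JD.fromA2 {A B : DG} {u v : ℕ × ℕ} (h : JD A B u v) {p : ℕ × ℕ}
    (hp : p ∈ (DG.cut A B u v).edges) (hx : p.2 ∈ A.verts) :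
    p ∈ A.edges ∧ p ≠ u ∧ p = mp u v p := by
  have := h.b1 v h.vB
  have := h.disj
  have := h.b1 p
  have hp' := mem_cut.1 hp
  have : p ∈ A.edges ∧ p ≠ u := by grind
  exact ⟨this.1, this.2, ((h.mapA this.1).2.2 this.2).symm⟩

theorem JD.fromB {A B : DG} {u v : ℕ × ℕ} (h : JD A B u v) {p : ℕ × ℕ}
    (hp : p ∈ (DG.cut A B u v).edges) (hx : p.2 ∈ B.verts) :
    ∃ e ∈ B.edges, p = mp u v e ∧ p.2 = e.2 := by
  rw [mem_cut] at hp
  rcases hp with rfl | hp | hp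
  · exact ⟨v, h.vB, by simp [mp]⟩
  · exact (h.disj _ (h.a1 p hp.1).2 hx).elim
  · exact ⟨p, hp.1, ((h.mapB hp.1).2.2 hp.2).symm, rfl⟩

theorem JD.fromB2 {A B : DG} {u v : ℕ × ℕ} (h : JD A B u v) {p : ℕ × ℕ}
    (hp : p ∈ (DG.cut A B u v).edges) (hx : p.1 ∈ B.verts) :
    p ∈ B.edges ∧ p ≠ v ∧ p = mp u v p := by
  have := h.a1 u h.uA
  have := h.disj
  have := h.a1 p
  have hp' := mem_cut.1 hp
  have : p ∈ B.edges ∧ p ≠ v := by grind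
  exact ⟨this.1, this.2, ((h.mapB this.1).2.2 this.2).symm⟩

/-- labels of the cut are the images of the labels of its parts -/
def LRel (A : DG) (u v : ℕ × ℕ) (LA L : Lab) : Prop :=
  ∀ x, Inn A x → ∀ Y X, L x Y X = mp u v (LA x Y X)

theorem join_core {A B : DG} {u v : ℕ × ℕ} (h : JD A B u v) {LA LB L : Lab}
    (cA : Core A LA) (cB : Core B LB) {εA εB : DistE}
    (iA : Inv A LA εA) (iB : Inv B LB εB) (hLA : LRel A u v LA L) (hLB : LRel B u v LB L)
    (hXYC : ∀ Y : YDir, u = εA Y XDir.E ∨ v = εB Y XDir.W) :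
    Core (DG.cut A B u v) L where
  ori := h.ori
  conn := h.conn cA cB
  tree := h.tree cA cB
  fW := by
    intro p hp q hq hpq hne
    rcases h.memW hp with ⟨e, he, h1, h2⟩ | ⟨e, he, _, h1, rfl⟩
    · obtain ⟨f, hf, h3, h4⟩ := h.fromA hq (by rw [← hpq, h2]; exact (h.a1 e he).1)
      obtain ⟨g, hg, hg'⟩ := cA.fW e he f hf (by rw [← h2, hpq, h4]) (by rintro rfl; grind)
      have := h.u1 e he
      refine ⟨g, mem_cut.2 (Or.inr (Or.inl ⟨hg, by rintro rfl; grind⟩)), by rw [hg', h2]⟩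
    · obtain ⟨hf, h3, h4⟩ := h.fromB2 hq (by rw [← hpq]; exact (h.b1 p he).1)
      obtain ⟨g, hg, hg'⟩ := cB.fW p he q hf hpq hne
      exact ⟨mp u v g, (h.mapB hg).1, by rw [(h.mapB hg).2.1, hg']⟩
  fE := by
    intro p hp q hq hpq hne
    have hv : p.2 ∈ A.verts ∨ p.2 ∈ B.verts := by
      have := (h.ori.1 p hp).2
      rw [vmem_cut h] at this
      tauto
    rcases hv with hv | hv
    · obtain ⟨he, h1, _⟩ := h.fromA2 hp hv
      obtain ⟨hf, h3, _⟩ := h.fromA2 hq (hpq ▸ hv)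
      obtain ⟨g, hg, hg'⟩ := cA.fE p he q hf hpq hne
      exact ⟨mp u v g, (h.mapA hg).1, by rw [(h.mapA hg).2.1, hg']⟩
    · obtain ⟨e, he, h1, h2⟩ := h.fromB hp hv
      obtain ⟨f, hf, h3, h4⟩ := h.fromB hq (hpq ▸ hv)
      obtain ⟨g, hg, hg'⟩ := cB.fE e he f hf (by rw [← h2, hpq, h4]) (by rintro rfl; grind)
      have := h.v1 e he
      refine ⟨g, mem_cut.2 (Or.inr (Or.inr ⟨hg, by rintro rfl; grind⟩)), by rw [hg', h2]⟩
  inn := by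
    obtain ⟨a, ha⟩ := cA.inn
    exact ⟨a, (h.innA (inn_mem h.a1 ha)).2 ha⟩
  prop := by
    intro a ha Y
    rcases h.innCases ha with ⟨hv, hi⟩ | ⟨hv, hi⟩
    · obtain ⟨h1, h2, h3, h4⟩ := cA.prop a hi Y
      rw [hLA a hi, hLA a hi]
      refine ⟨(h.mapA h1).1, ?_, (h.mapA h3).1, by rw [(h.mapA h3).2.1, h4]⟩
      rw [(h.mapA h1).2.2, h2]
      intro h5
      apply h.innU
      rw [← h5, h2]; exact hi
    · obtain ⟨h1, h2, h3, h4⟩ := cB.prop a hi Y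
      rw [hLB a hi, hLB a hi]
      refine ⟨(h.mapB h1).1, by rw [(h.mapB h1).2.1, h2], (h.mapB h3).1, ?_⟩
      rw [(h.mapB h3).2.2, h4]
      intro h5
      apply h.innV
      rw [← h5, h4]; exact hi
  sW := by
    intro a ha hL e he hea
    rcases h.innCases ha with ⟨hv, hi⟩ | ⟨hv, hi⟩
    · rw [hLA a hi, hLA a hi] at hL
      have := h.injA (cA.prop a hi _).1 (cA.prop a hi _).1 hL
      obtain ⟨h1, h2, h3⟩ := h.fromA2 he (hea ▸ hv)
      rw [h3, hLA a hi, ← cA.sW a hi this e h1 hea]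
    · rw [hLB a hi, hLB a hi] at hL
      have := h.injB (cB.prop a hi _).1 (cB.prop a hi _).1 hL
      obtain ⟨f, h1, h2, h3⟩ := h.fromB he (hea ▸ hv)
      rw [h2, hLB a hi, ← cB.sW a hi this f h1 (by rw [← h3, hea])]
  sE := by
    intro a ha hL e he hea
    rcases h.innCases ha with ⟨hv, hi⟩ | ⟨hv, hi⟩
    · rw [hLA a hi, hLA a hi] at hL
      have := h.injA (cA.prop a hi _).2.2.1 (cA.prop a hi _).2.2.1 hL
      obtain ⟨f, h1, h2, h3⟩ := h.fromA he (hea ▸ hv)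
      rw [h2, hLA a hi, ← cA.sE a hi this f h1 (by rw [← h3, hea])]
    · rw [hLB a hi, hLB a hi] at hL
      have := h.injB (cB.prop a hi _).2.2.1 (cB.prop a hi _).2.2.1 hL
      obtain ⟨h1, h2, h3⟩ := h.fromB2 he (hea ▸ hv)
      rw [h3, hLB a hi, ← cB.sE a hi this e h1 hea]
  dec := by
    intro Y p q hp hq hr hi hj
    have key : ∀ e f, p = mp u v e → q = mp u v f → e ∈ A.edges → f ∈ B.edges →
        Rch A e u → Rch B v f → L p.1 Y XDir.E = p ∨ L q.2 Y XDir.W = q := by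
      intro e f h1 h2 he hf hr1 hr2
      have e1 : p.1 = e.1 := by rw [h1, (h.mapA he).2.1]
      have e2 : q.2 = f.2 := by rw [h2, (h.mapB hf).2.1]
      have hi' : Inn A e.1 := (h.innA (h.a1 e he).1).1 (e1 ▸ hi)
      have hj' : Inn B f.2 := (h.innB (h.b1 f hf).2).1 (e2 ▸ hj)
      rcases hXYC Y with hu | hv
      · left
        rw [e1, hLA _ hi', iA.oneE Y e he hi' (hu ▸ hr1), h1]
      · right
        rw [e2, hLB _ hj', iB.oneW Y f hf hj' (hv ▸ hr2), h2]
    obtain ⟨e, f, h1, h2, h3⟩ := h.rch hp hr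
    rcases h3 with ⟨he, hf, h3⟩ | ⟨he, hf, h3⟩ | ⟨he, hf, h3, h3'⟩
    · by_cases hfu : f = u
      · subst hfu
        exact key e v h1 (by rw [h2]; simp [mp]) he h.vB h3 Relation.ReflTransGen.refl
      · have e1 : p.1 = e.1 := by rw [h1, (h.mapA he).2.1]
        have e2 : q = f := by rw [h2, (h.mapA hf).2.2 hfu]
        have hi' : Inn A e.1 := (h.innA (h.a1 e he).1).1 (e1 ▸ hi)
        have hj' : Inn A f.2 := (h.innA (h.a1 f hf).2).1 (e2 ▸ hj)
        rcases cA.dec Y e f he hf h3 hi' hj' with h4 | h4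
        · left; rw [e1, hLA _ hi', h4, h1]
        · right; rw [h2, (h.mapA hf).2.2 hfu, hLA _ hj', h4, (h.mapA hf).2.2 hfu]
    · by_cases hev : e = v
      · subst hev
        exact key u f (by rw [h1]; simp [mp]) h2 h.uA hf Relation.ReflTransGen.refl h3
      · have e1 : p = e := by rw [h1, (h.mapB he).2.2 hev]
        have e2 : q.2 = f.2 := by rw [h2, (h.mapB hf).2.1]
        have hi' : Inn B e.1 := (h.innB (h.b1 e he).1).1 (e1 ▸ hi)
        have hj' : Inn B f.2 := (h.innB (h.b1 f hf).2).1 (e2 ▸ hj)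
        rcases cB.dec Y e f he hf h3 hi' hj' with h4 | h4
        · left; rw [h1, (h.mapB he).2.2 hev, hLB _ hi', h4, (h.mapB he).2.2 hev]
        · right; rw [e2, hLB _ hj', h4, h2]
    · exact key e f h1 h2 he hf h3 h3'

theorem JD.injAB {A B : DG} {u v : ℕ × ℕ} (h : JD A B u v) {e f : ℕ × ℕ}
    (he : e ∈ A.edges) (hf : f ∈ B.edges) (hh : mp u v e = mp u v f) : e = u ∧ f = v := by
  have := h.a1 e he
  have := h.b1 f hf
  have := h.a1 u h.uA
  have := h.b1 v h.vB
  have := h.disj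
  grind [mp]

theorem JD.mpu {A B : DG} {u v : ℕ × ℕ} (_h : JD A B u v) : mp u v u = mp u v v := by
  simp [mp]

theorem JD.rchToA {A B : DG} {u v : ℕ × ℕ} (h : JD A B u v) {p f : ℕ × ℕ}
    (hp : p ∈ (DG.cut A B u v).edges) (hf : f ∈ A.edges) (hfu : f ≠ u)
    (hr : Rch (DG.cut A B u v) p (mp u v f)) :
    ∃ e ∈ A.edges, p = mp u v e ∧ Rch A e f := by
  obtain ⟨e, f', h1, h2, h3⟩ := h.rch hp hr
  rcases h3 with ⟨he, hf', h3⟩ | ⟨he, hf', h3⟩ | ⟨he, hf', h3, h3'⟩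
  · obtain rfl := h.injA hf hf' h2
    exact ⟨e, he, h1, h3⟩
  · exact (hfu (h.injAB hf hf' h2).1).elim
  · exact (hfu (h.injAB hf hf' h2).1).elim

theorem JD.rchToB {A B : DG} {u v : ℕ × ℕ} (h : JD A B u v) {p f : ℕ × ℕ}
    (hp : p ∈ (DG.cut A B u v).edges) (hf : f ∈ B.edges)
    (hr : Rch (DG.cut A B u v) p (mp u v f)) :
    (∃ e ∈ B.edges, e ≠ v ∧ p = mp u v e ∧ Rch B e f) ∨
    (∃ e ∈ A.edges, p = mp u v e ∧ Rch A e u ∧ Rch B v f) := by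
  obtain ⟨e, f', h1, h2, h3⟩ := h.rch hp hr
  rcases h3 with ⟨he, hf', h3⟩ | ⟨he, hf', h3⟩ | ⟨he, hf', h3, h3'⟩
  · obtain ⟨rfl, rfl⟩ := h.injAB hf' hf h2.symm
    exact Or.inr ⟨e, he, h1, h3, Relation.ReflTransGen.refl⟩
  · obtain rfl := h.injB hf hf' h2
    by_cases hev : e = v
    · subst hev
      exact Or.inr ⟨u, h.uA, h1.trans h.mpu.symm, Relation.ReflTransGen.refl, h3⟩
    · exact Or.inl ⟨e, he, hev, h1, h3⟩
  · obtain rfl := h.injB hf hf' h2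
    exact Or.inr ⟨e, he, h1, h3, h3'⟩

theorem JD.rchFromB {A B : DG} {u v : ℕ × ℕ} (h : JD A B u v) {e q : ℕ × ℕ}
    (he : e ∈ B.edges) (hev : e ≠ v)
    (hr : Rch (DG.cut A B u v) (mp u v e) q) :
    ∃ f ∈ B.edges, q = mp u v f ∧ Rch B e f := by
  obtain ⟨e', f, h1, h2, h3⟩ := h.rch (h.mapB he).1 hr
  rcases h3 with ⟨he', hf', h3⟩ | ⟨he', hf', h3⟩ | ⟨he', hf', h3, h3'⟩
  · exact (hev (h.injAB he' he h1.symm).2).elim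
  · obtain rfl := h.injB he he' h1
    exact ⟨f, hf', h2, h3⟩
  · exact (hev (h.injAB he' he h1.symm).2).elim

theorem JD.rchFromA {A B : DG} {u v : ℕ × ℕ} (h : JD A B u v) {e q : ℕ × ℕ}
    (he : e ∈ A.edges)
    (hr : Rch (DG.cut A B u v) (mp u v e) q) :
    (∃ f ∈ A.edges, f ≠ u ∧ q = mp u v f ∧ Rch A e f) ∨
    (∃ f ∈ B.edges, q = mp u v f ∧ Rch A e u ∧ Rch B v f) := by
  obtain ⟨e', f, h1, h2, h3⟩ := h.rch (h.mapA he).1 hr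
  rcases h3 with ⟨he', hf', h3⟩ | ⟨he', hf', h3⟩ | ⟨he', hf', h3, h3'⟩
  · obtain rfl := h.injA he he' h1
    by_cases hfu : f = u
    · subst hfu
      exact Or.inr ⟨v, h.vB, h2.trans h.mpu, h3, Relation.ReflTransGen.refl⟩
    · exact Or.inl ⟨f, hf', hfu, h2, h3⟩
  · obtain ⟨rfl, rfl⟩ := h.injAB he he' h1
    exact Or.inr ⟨f, hf', h2, Relation.ReflTransGen.refl, h3⟩
  · obtain rfl := h.injA he he' h1
    exact Or.inr ⟨f, hf', h2, h3, h3'⟩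

theorem join_inv {A B : DG} {u v : ℕ × ℕ} (h : JD A B u v) {LA LB L : Lab}
    (cA : Core A LA) (cB : Core B LB) {εA εB ε : DistE}
    (iA : Inv A LA εA) (iB : Inv B LB εB) (hLA : LRel A u v LA L) (hLB : LRel B u v LB L)
    (hXYC : ∀ Y : YDir, u = εA Y XDir.E ∨ v = εB Y XDir.W)
    (hεW : ∀ Y : YDir, ε Y XDir.W =
        if v = εB Y XDir.W then εA Y XDir.W else εB Y XDir.W)
    (hεE : ∀ Y : YDir, ε Y XDir.E =
        if u = εA Y XDir.E then εB Y XDir.E else εA Y XDir.E) :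
    Inv (DG.cut A B u v) L ε := by
  have innA : ∀ {x}, Inn A x → Inn (DG.cut A B u v) x :=
    fun hx => (h.innA (inn_mem h.a1 hx)).2 hx
  have innB : ∀ {x}, Inn B x → Inn (DG.cut A B u v) x :=
    fun hx => (h.innB (inn_mem h.b1 hx)).2 hx
  have nAW : ∀ Y, εA Y XDir.W ≠ u := fun Y hh => h.innU (hh ▸ (iA.eW Y).2.2)
  have nBE : ∀ Y, εB Y XDir.E ≠ v := fun Y hh => h.innV (hh ▸ (iB.eE Y).2.2)
  have mAW : ∀ Y, mp u v (εA Y XDir.W) = εA Y XDir.W :=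
    fun Y => (h.mapA (iA.eW Y).1).2.2 (nAW Y)
  have mBE : ∀ Y, mp u v (εB Y XDir.E) = εB Y XDir.E :=
    fun Y => (h.mapB (iB.eE Y).1).2.2 (nBE Y)
  have mAE : ∀ Y, u ≠ εA Y XDir.E → mp u v (εA Y XDir.E) = εA Y XDir.E :=
    fun Y hh => (h.mapA (iA.eE Y).1).2.2 (Ne.symm hh)
  have mBW : ∀ Y, v ≠ εB Y XDir.W → mp u v (εB Y XDir.W) = εB Y XDir.W :=
    fun Y hh => (h.mapB (iB.eW Y).1).2.2 (Ne.symm hh)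
  -- labels
  have labE : ∀ {e Y}, e ∈ A.edges → Inn A e.1 →
      (L (mp u v e).1 Y XDir.E = mp u v e ↔ LA e.1 Y XDir.E = e) := by
    intro e Y he hi
    rw [(h.mapA he).2.1, hLA _ hi]
    exact ⟨fun hh => h.injA (cA.prop _ hi Y).2.2.1 he hh, fun hh => by rw [hh]⟩
  have labE' : ∀ {e Y}, e ∈ B.edges → e ≠ v → Inn B e.1 →
      (L (mp u v e).1 Y XDir.E = mp u v e ↔ LB e.1 Y XDir.E = e) := by
    intro e Y he hev hi
    rw [show (mp u v e).1 = e.1 by rw [(h.mapB he).2.2 hev], hLB _ hi]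
    exact ⟨fun hh => h.injB (cB.prop _ hi Y).2.2.1 he hh, fun hh => by rw [hh]⟩
  have labW : ∀ {e Y}, e ∈ B.edges → Inn B e.2 →
      (L (mp u v e).2 Y XDir.W = mp u v e ↔ LB e.2 Y XDir.W = e) := by
    intro e Y he hi
    rw [(h.mapB he).2.1, hLB _ hi]
    exact ⟨fun hh => h.injB (cB.prop _ hi Y).1 he hh, fun hh => by rw [hh]⟩
  have labW' : ∀ {e Y}, e ∈ A.edges → e ≠ u → Inn A e.2 →
      (L (mp u v e).2 Y XDir.W = mp u v e ↔ LA e.2 Y XDir.W = e) := by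
    intro e Y he hev hi
    rw [show (mp u v e).2 = e.2 by rw [(h.mapA he).2.2 hev], hLA _ hi]
    exact ⟨fun hh => h.injA (cA.prop _ hi Y).1 he hh, fun hh => by rw [hh]⟩
  refine ⟨?_, ?_, ?_, ?_, ?_, ?_, ?_⟩
  · intro Y
    rw [hεW]
    split_ifs with hv
    · obtain ⟨h1, h2, h3⟩ := iA.eW Y
      refine ⟨by rw [← mAW]; exact (h.mapA h1).1, ?_, innA h3⟩
      intro e he h4
      obtain ⟨h5, _⟩ := h.fromA2 he (h4 ▸ (h.a1 _ h1).1)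
      exact h2 e h5 h4
    · obtain ⟨h1, h2, h3⟩ := iB.eW Y
      refine ⟨by rw [← mBW Y hv]; exact (h.mapB h1).1, ?_, innB h3⟩
      intro e he h4
      obtain ⟨f, h5, _, h6⟩ := h.fromB he (h4 ▸ (h.b1 _ h1).1)
      exact h2 f h5 (h6 ▸ h4)
  · intro Y
    rw [hεE]
    split_ifs with hv
    · obtain ⟨h1, h2, h3⟩ := iB.eE Y
      refine ⟨by rw [← mBE]; exact (h.mapB h1).1, ?_, innB h3⟩
      intro e he h4
      obtain ⟨h5, _⟩ := h.fromB2 he (h4 ▸ (h.b1 _ h1).2)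
      exact h2 e h5 h4
    · obtain ⟨h1, h2, h3⟩ := iA.eE Y
      refine ⟨by rw [← mAE Y hv]; exact (h.mapA h1).1, ?_, innA h3⟩
      intro e he h4
      obtain ⟨f, h5, _, h6⟩ := h.fromA he (h4 ▸ (h.a1 _ h1).2)
      exact h2 f h5 (h6 ▸ h4)
  · intro Y p hp hi hr
    rw [hεE] at hr
    split_ifs at hr with hu
    · rw [← mBE] at hr
      rcases h.rchToB hp (iB.eE Y).1 hr with ⟨e, he, hev, rfl, h2⟩ | ⟨e, he, rfl, h2, _⟩
      · have hi' : Inn B e.1 := by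
          rw [(h.mapB he).2.2 hev] at hi
          exact (h.innB (h.b1 e he).1).1 hi
        exact (labE' he hev hi').2 (iB.oneE Y e he hi' h2)
      · have hi' : Inn A e.1 := by
          rw [(h.mapA he).2.1] at hi
          exact (h.innA (h.a1 e he).1).1 hi
        exact (labE he hi').2 (iA.oneE Y e he hi' (hu ▸ h2))
    · rw [← mAE Y hu] at hr
      obtain ⟨e, he, rfl, h2⟩ := h.rchToA hp (iA.eE Y).1 (Ne.symm hu) hr
      have hi' : Inn A e.1 := by
        rw [(h.mapA he).2.1] at hi
        exact (h.innA (h.a1 e he).1).1 hi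
      exact (labE he hi').2 (iA.oneE Y e he hi' h2)
  · intro Y p hp hi hr
    rw [hεW] at hr
    split_ifs at hr with hu
    · rw [← mAW] at hr
      rcases h.rchFromA (iA.eW Y).1 hr with ⟨e, he, hev, rfl, h2⟩ | ⟨e, he, rfl, _, h2⟩
      · have hi' : Inn A e.2 := by
          rw [(h.mapA he).2.2 hev] at hi
          exact (h.innA (h.a1 e he).2).1 hi
        exact (labW' he hev hi').2 (iA.oneW Y e he hi' h2)
      · have hi' : Inn B e.2 := by
          rw [(h.mapB he).2.1] at hi
          exact (h.innB (h.b1 e he).2).1 hi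
        exact (labW he hi').2 (iB.oneW Y e he hi' (hu ▸ h2))
    · rw [← mBW Y hu] at hr
      obtain ⟨e, he, rfl, h2⟩ := h.rchFromB (iB.eW Y).1 (Ne.symm hu) hr
      have hi' : Inn B e.2 := by
        rw [(h.mapB he).2.1] at hi
        exact (h.innB (h.b1 e he).2).1 hi
      exact (labW he hi').2 (iB.oneW Y e he hi' h2)
  · intro Y p hp hpE hne
    rw [hεE] at hne
    have hpv := (h.ori.1 p hp).2
    rw [vmem_cut h] at hpv
    -- transporting bad paths
    have trA : ∀ e ∈ A.edges, Inn A e.1 → LA e.1 Y XDir.E ≠ e →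
        Rch (DG.cut A B u v) (mp u v e) p →
        ∃ e ∈ (DG.cut A B u v).edges, Inn (DG.cut A B u v) e.1 ∧
          Rch (DG.cut A B u v) e p ∧ L e.1 Y XDir.E ≠ e := by
      intro e he hi hb hr
      refine ⟨mp u v e, (h.mapA he).1, ?_, hr, fun hh => hb ((labE he hi).1 hh)⟩
      rw [(h.mapA he).2.1]; exact innA hi
    have trB : ∀ e ∈ B.edges, Inn B e.1 → LB e.1 Y XDir.E ≠ e →
        Rch (DG.cut A B u v) (mp u v e) p →
        ∃ e ∈ (DG.cut A B u v).edges, Inn (DG.cut A B u v) e.1 ∧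
          Rch (DG.cut A B u v) e p ∧ L e.1 Y XDir.E ≠ e := by
      intro e he hi hb hr
      have hev : e ≠ v := by rintro rfl; exact h.innV hi
      refine ⟨mp u v e, (h.mapB he).1, ?_, hr, fun hh => hb ((labE' he hev hi).1 hh)⟩
      rw [(h.mapB he).2.2 hev]; exact innB hi
    rcases hpv with ⟨hpv, _⟩ | ⟨hpv, _⟩
    · obtain ⟨h1, h2, h3⟩ := h.fromA2 hp hpv
      have hpne : p ≠ εA Y XDir.E := by
        split_ifs at hne with hu
        · rw [← hu]; exact h2
        · exact hne
      obtain ⟨e, he, hi, hr, hb⟩ := iA.twoE Y p h1 (by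
        intro g hg hg'
        exact hpE (mp u v g) (h.mapA hg).1 (by rw [(h.mapA hg).2.1, hg'])) hpne
      exact trA e he hi hb (by rw [h3]; exact (h.rchA he hr).2)
    · obtain ⟨f, h1, h2, h3⟩ := h.fromB hp hpv
      have hfE : ∀ e ∈ B.edges, e.1 ≠ f.2 := by
        intro g hg hg'
        have hgv : g ≠ v := by
          rintro rfl
          exact h.v1 f h1 hg'.symm
        exact hpE (mp u v g) (h.mapB hg).1 (by rw [(h.mapB hg).2.2 hgv, hg', h3])
      by_cases hfe : f = εB Y XDir.E
      · have hu : u ≠ εA Y XDir.E := by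
          intro hu
          rw [if_pos hu] at hne
          exact hne (by rw [h2, hfe, mBE])
        have hv : v = εB Y XDir.W := (hXYC Y).resolve_left hu
        obtain ⟨e, he, hi, hr, hb⟩ := iA.twoE Y u h.uA h.u1 hu
        refine trA e he hi hb ?_
        have r1 := (h.rchA he hr).2
        have r2 := (h.rchB h.vB (hv ▸ iB.three Y)).2
        rw [h.mpu] at r1
        rw [h2, hfe]
        exact r1.trans r2
      · obtain ⟨e, he, hi, hr, hb⟩ := iB.twoE Y f h1 hfE hfe
        exact trB e he hi hb (by rw [h2]; exact (h.rchB he hr).2)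
  · intro Y p hp hpE hne
    rw [hεW] at hne
    have hpv := (h.ori.1 p hp).1
    rw [vmem_cut h] at hpv
    have trB : ∀ e ∈ B.edges, Inn B e.2 → LB e.2 Y XDir.W ≠ e →
        Rch (DG.cut A B u v) p (mp u v e) →
        ∃ e ∈ (DG.cut A B u v).edges, Inn (DG.cut A B u v) e.2 ∧
          Rch (DG.cut A B u v) p e ∧ L e.2 Y XDir.W ≠ e := by
      intro e he hi hb hr
      refine ⟨mp u v e, (h.mapB he).1, ?_, hr, fun hh => hb ((labW he hi).1 hh)⟩
      rw [(h.mapB he).2.1]; exact innB hi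
    have trA : ∀ e ∈ A.edges, Inn A e.2 → LA e.2 Y XDir.W ≠ e →
        Rch (DG.cut A B u v) p (mp u v e) →
        ∃ e ∈ (DG.cut A B u v).edges, Inn (DG.cut A B u v) e.2 ∧
          Rch (DG.cut A B u v) p e ∧ L e.2 Y XDir.W ≠ e := by
      intro e he hi hb hr
      have hev : e ≠ u := by rintro rfl; exact h.innU hi
      refine ⟨mp u v e, (h.mapA he).1, ?_, hr, fun hh => hb ((labW' he hev hi).1 hh)⟩
      rw [(h.mapA he).2.2 hev]; exact innA hi
    rcases hpv with ⟨hpv, _⟩ | ⟨hpv, _⟩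
    · obtain ⟨f, h1, h2, h3⟩ := h.fromA hp hpv
      have hfE : ∀ e ∈ A.edges, e.2 ≠ f.1 := by
        intro g hg hg'
        have hgv : g ≠ u := by
          rintro rfl
          exact h.u1 f h1 hg'.symm
        exact hpE (mp u v g) (h.mapA hg).1 (by rw [(h.mapA hg).2.2 hgv, hg', h3])
      by_cases hfe : f = εA Y XDir.W
      · have hv : v ≠ εB Y XDir.W := by
          intro hv
          rw [if_pos hv] at hne
          exact hne (by rw [h2, hfe, mAW])
        have hu : u = εA Y XDir.E := (hXYC Y).resolve_right hv
        obtain ⟨e, he, hi, hr, hb⟩ := iB.twoW Y v h.vB h.v1 hv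
        refine trB e he hi hb ?_
        have r1 := (h.rchB h.vB hr).2
        have r2 := (h.rchA (iA.eW Y).1 (hu ▸ iA.three Y)).2
        rw [h.mpu] at r2
        rw [h2, hfe]
        exact r2.trans r1
      · obtain ⟨e, he, hi, hr, hb⟩ := iA.twoW Y f h1 hfE hfe
        exact trA e he hi hb (by rw [h2]; exact (h.rchA h1 hr).2)
    · obtain ⟨h1, h2, h3⟩ := h.fromB2 hp hpv
      have hpne : p ≠ εB Y XDir.W := by
        split_ifs at hne with hu
        · rw [← hu]; exact h2
        · exact hne
      obtain ⟨e, he, hi, hr, hb⟩ := iB.twoW Y p h1 (by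
        intro g hg hg'
        exact hpE (mp u v g) (h.mapB hg).1 (by rw [(h.mapB hg).2.1, hg'])) hpne
      exact trB e he hi hb (by rw [h3]; exact (h.rchB h1 hr).2)
  · intro Y
    rw [hεW, hεE]
    have rA := (h.rchA (iA.eW Y).1 (iA.three Y)).2
    have rB := (h.rchB (iB.eW Y).1 (iB.three Y)).2
    rw [mAW] at rA
    rw [mBE] at rB
    split_ifs with h1 h2 h2
    · rw [← h2, h.mpu] at rA
      rw [← h1] at rB
      exact rA.trans rB
    · rw [mAE Y h2] at rA; exact rA
    · rw [mBW Y h1] at rB; exact rB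
    · rcases hXYC Y with h3 | h3
      · exact (h2 h3).elim
      · exact (h1 h3).elim

/-- Pulling back an edge of the cut. -/
def bk (u v w p : ℕ × ℕ) : ℕ × ℕ := if p = (u.1, v.2) then w else p

theorem JD.bkA {A B : DG} {u v : ℕ × ℕ} (h : JD A B u v) {e : ℕ × ℕ} (he : e ∈ A.edges) :
    bk u v u (mp u v e) = e := by
  have := h.a1 e he
  have := h.b1 v h.vB
  have := h.disj
  grind [mp, bk]

theorem JD.bkB {A B : DG} {u v : ℕ × ℕ} (h : JD A B u v) {e : ℕ × ℕ} (he : e ∈ B.edges) :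
    bk u v v (mp u v e) = e := by
  have := h.b1 e he
  have := h.a1 u h.uA
  have := h.disj
  grind [mp, bk]

theorem JD.mpbk {A B : DG} {u v : ℕ × ℕ} (h : JD A B u v) {p w : ℕ × ℕ}
    (hp : p ∈ (DG.cut A B u v).edges) (hw : w = u ∨ w = v) :
    mp u v (bk u v w p) = p := by
  have := h.b1 v h.vB
  have := h.a1 u h.uA
  have := h.disj
  rw [mem_cut] at hp
  have := h.b1 p
  have := h.a1 p
  grind [mp, bk]

theorem split_coreA {A B : DG} {u v : ℕ × ℕ} (h : JD A B u v) {L : Lab}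
    (c : Core (DG.cut A B u v) L) (hi0 : Inn (DG.cut A B u v) u.1) :
    Core A (fun x Y X => bk u v u (L x Y X)) := by
  have huA := h.a1 u h.uA
  have hvB := h.b1 v h.vB
  have hd := h.disj
  have innA : ∀ {x}, Inn A x → Inn (DG.cut A B u v) x :=
    fun hx => (h.innA (inn_mem h.a1 hx)).2 hx
  have lW : ∀ {x Y}, Inn A x → L x Y XDir.W ∈ A.edges ∧ (L x Y XDir.W).2 = x ∧
      bk u v u (L x Y XDir.W) = L x Y XDir.W := by
    intro x Y hx
    obtain ⟨h1, h2, _, _⟩ := c.prop x (innA hx) Y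
    obtain ⟨h3, h4, h5⟩ := h.fromA2 h1 (by rw [h2]; exact inn_mem h.a1 hx)
    refine ⟨h3, h2, ?_⟩
    conv_lhs => rw [h5]
    exact h.bkA h3
  have lE : ∀ {x Y}, Inn A x → ∃ e ∈ A.edges, L x Y XDir.E = mp u v e ∧ e.1 = x ∧
      bk u v u (L x Y XDir.E) = e := by
    intro x Y hx
    obtain ⟨_, _, h1, h2⟩ := c.prop x (innA hx) Y
    obtain ⟨e, h3, h4, h5⟩ := h.fromA h1 (by rw [h2]; exact inn_mem h.a1 hx)
    exact ⟨e, h3, h4, by rw [← h5, h2], by rw [h4]; exact h.bkA h3⟩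
  refine ⟨h.oA, ?_, ?_, ?_, ?_, ⟨u.1, (h.innA huA.1).1 hi0⟩, ?_, ?_, ?_, ?_⟩
  · intro S hS
    have hu0 := hS u h.uA
    have key := c.conn {x | (x ∈ A.verts ∧ x ∈ S) ∨ (x ∈ B.verts ∧ u.1 ∈ S)} (by
      intro e he
      rw [mem_cut] at he
      have := h.a1 e
      have := h.b1 e
      have := hS e
      simp only [Set.mem_ofPred_eq]
      grind)
    simp only [Set.mem_ofPred_eq] at key
    have hu1 : u.1 ∈ (DG.cut A B u v).verts := (vmem_cut h).2 (Or.inl ⟨huA.1, h.u1 u h.uA⟩)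
    have k1 : ∀ x ∈ A.verts, x ∈ S ↔ u.1 ∈ S := by
      intro x hx
      by_cases hxu : x = u.2
      · rw [hxu, hu0]
      · have hx1 : x ∈ (DG.cut A B u v).verts := (vmem_cut h).2 (Or.inl ⟨hx, hxu⟩)
        have := key x hx1 u.1 hu1
        have := key u.1 hu1 x hx1
        have := hd x hx
        have := hd u.1 huA.1
        tauto
    intro x hx y hy hxS
    rw [k1 y hy, ← k1 x hx]; exact hxS
  · intro e he
    by_cases heu : e = u
    · subst heu
      refine ⟨{x | x ≠ e.2}, h.u1 e he, by simp, ?_⟩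
      intro f hf hne
      have := h.u1 f hf
      have := h.u2 f hf
      simp only [Set.mem_ofPred_eq]
      tauto
    · obtain ⟨S, h1, h2, h3⟩ := c.tree e (mem_cut.2 (Or.inr (Or.inl ⟨he, heu⟩)))
      have := h.u1 e he
      have := h.u2 e he
      have h4 := h3 (u.1, v.2) (mem_cut.2 (Or.inl rfl)) (by
        rintro rfl
        exact hd _ (h.a1 _ he).2 hvB.2)
      refine ⟨{x | (x ≠ u.2 ∧ x ∈ S) ∨ (x = u.2 ∧ v.2 ∈ S)}, ?_, ?_, ?_⟩
      · simp only [Set.mem_ofPred_eq]; tauto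
      · simp only [Set.mem_ofPred_eq]; tauto
      · intro f hf hne
        have h5 := h.u1 f hf
        have h6 := h.u2 f hf
        by_cases hfu : f = u
        · subst hfu; simp only [Set.mem_ofPred_eq]; tauto
        · have := h3 f (mem_cut.2 (Or.inr (Or.inl ⟨hf, hfu⟩))) hne
          simp only [Set.mem_ofPred_eq]; tauto
  · intro e he f hf hef hne
    obtain ⟨g, hg, hg'⟩ := c.fW _ (h.mapA he).1 _ (h.mapA hf).1
      (by rw [(h.mapA he).2.1, (h.mapA hf).2.1, hef]) (fun hh => hne (h.injA he hf hh))
    rw [(h.mapA he).2.1] at hg'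
    exact ⟨g, (h.fromA2 hg (hg' ▸ (h.a1 e he).1)).1, hg'⟩
  · intro e he f hf hef hne
    have heu : e ≠ u := by
      rintro rfl
      exact hne (h.u2 f hf hef.symm).symm
    have hfu : f ≠ u := by
      rintro rfl
      exact hne (h.u2 e he hef)
    obtain ⟨g, hg, hg'⟩ := c.fE e (mem_cut.2 (Or.inr (Or.inl ⟨he, heu⟩))) f
      (mem_cut.2 (Or.inr (Or.inl ⟨hf, hfu⟩))) hef hne
    obtain ⟨k, hk, _, hk'⟩ := h.fromA hg (hg' ▸ (h.a1 e he).2)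
    exact ⟨k, hk, by rw [← hk', hg']⟩
  · intro a ha Y
    obtain ⟨h1, h2, h3⟩ := lW (Y := Y) ha
    obtain ⟨e, h4, h5, h6, h7⟩ := lE (Y := Y) ha
    simp only [h3, h7]
    exact ⟨h1, h2, h4, h6⟩
  · intro a ha hL e he hea
    simp only [(lW ha).2.2] at hL ⊢
    refine c.sW a (innA ha) hL e (mem_cut.2 (Or.inr (Or.inl ⟨he, ?_⟩))) hea
    rintro rfl
    exact h.innU (hea ▸ ha)
  · intro a ha hL e he hea
    obtain ⟨e1, h4, h5, h6, h7⟩ := lE (Y := YDir.N) ha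
    obtain ⟨e2, k4, k5, k6, k7⟩ := lE (Y := YDir.S) ha
    simp only [h7, k7] at hL ⊢
    subst hL
    have := c.sE a (innA ha) (by rw [h5, k5]) (mp u v e) (h.mapA he).1
      (by rw [(h.mapA he).2.1, hea])
    rw [h5] at this
    exact h.injA he h4 this
  · intro Y e f he hf hr hi hj
    have hfu : f ≠ u := by
      rintro rfl
      exact h.innU hj
    have e2 := (h.mapA hf).2.2 hfu
    rcases c.dec Y _ _ (h.mapA he).1 (h.mapA hf).1 (h.rchA he hr).2
      (by rw [(h.mapA he).2.1]; exact innA hi) (by rw [e2]; exact innA hj) with h1 | h1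
    · left
      rw [(h.mapA he).2.1] at h1
      simp only [h1]
      exact h.bkA he
    · right
      rw [e2] at h1
      simp only [h1]
      conv_lhs => rw [← e2]
      exact h.bkA hf

theorem split_coreB {A B : DG} {u v : ℕ × ℕ} (h : JD A B u v) {L : Lab}
    (c : Core (DG.cut A B u v) L) (hi0 : Inn (DG.cut A B u v) v.2) :
    Core B (fun x Y X => bk u v v (L x Y X)) := by
  have huA := h.a1 u h.uA
  have hvB := h.b1 v h.vB
  have hd := h.disj
  have innB : ∀ {x}, Inn B x → Inn (DG.cut A B u v) x :=
    fun hx => (h.innB (inn_mem h.b1 hx)).2 hx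
  have lE : ∀ {x Y}, Inn B x → L x Y XDir.E ∈ B.edges ∧ (L x Y XDir.E).1 = x ∧
      bk u v v (L x Y XDir.E) = L x Y XDir.E := by
    intro x Y hx
    obtain ⟨_, _, h1, h2⟩ := c.prop x (innB hx) Y
    obtain ⟨h3, h4, h5⟩ := h.fromB2 h1 (by rw [h2]; exact inn_mem h.b1 hx)
    refine ⟨h3, h2, ?_⟩
    conv_lhs => rw [h5]
    exact h.bkB h3
  have lW : ∀ {x Y}, Inn B x → ∃ e ∈ B.edges, L x Y XDir.W = mp u v e ∧ e.2 = x ∧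
      bk u v v (L x Y XDir.W) = e := by
    intro x Y hx
    obtain ⟨h1, h2, _, _⟩ := c.prop x (innB hx) Y
    obtain ⟨e, h3, h4, h5⟩ := h.fromB h1 (by rw [h2]; exact inn_mem h.b1 hx)
    exact ⟨e, h3, h4, by rw [← h5, h2], by rw [h4]; exact h.bkB h3⟩
  refine ⟨h.oB, ?_, ?_, ?_, ?_, ⟨v.2, (h.innB hvB.2).1 hi0⟩, ?_, ?_, ?_, ?_⟩
  · intro S hS
    have hv0 := hS v h.vB
    have key := c.conn {x | (x ∈ B.verts ∧ x ∈ S) ∨ (x ∈ A.verts ∧ v.2 ∈ S)} (by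
      intro e he
      rw [mem_cut] at he
      have := h.a1 e
      have := h.b1 e
      have := hS e
      simp only [Set.mem_ofPred_eq]
      grind)
    simp only [Set.mem_ofPred_eq] at key
    have hv1 : v.2 ∈ (DG.cut A B u v).verts := (vmem_cut h).2 (Or.inr ⟨hvB.2, h.v1 v h.vB⟩)
    have k1 : ∀ x ∈ B.verts, x ∈ S ↔ v.2 ∈ S := by
      intro x hx
      by_cases hxu : x = v.1
      · rw [hxu, hv0]
      · have hx1 : x ∈ (DG.cut A B u v).verts := (vmem_cut h).2 (Or.inr ⟨hx, hxu⟩)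
        have := key x hx1 v.2 hv1
        have := key v.2 hv1 x hx1
        have := hd x
        have := hd v.2
        tauto
    intro x hx y hy hxS
    rw [k1 y hy, ← k1 x hx]; exact hxS
  · intro e he
    by_cases heu : e = v
    · subst heu
      refine ⟨{x | x = e.1}, rfl, h.v1 e he, ?_⟩
      intro f hf hne
      have := h.v1 f hf
      have := h.v2 f hf
      simp only [Set.mem_ofPred_eq]
      tauto
    · obtain ⟨S, h1, h2, h3⟩ := c.tree e (mem_cut.2 (Or.inr (Or.inr ⟨he, heu⟩)))
      have := h.v1 e he
      have := h.v2 e he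
      have h4 := h3 (u.1, v.2) (mem_cut.2 (Or.inl rfl)) (by
        rintro rfl
        exact hd _ huA.1 (h.b1 _ he).1)
      refine ⟨{x | (x ≠ v.1 ∧ x ∈ S) ∨ (x = v.1 ∧ u.1 ∈ S)}, ?_, ?_, ?_⟩
      · simp only [Set.mem_ofPred_eq]; tauto
      · simp only [Set.mem_ofPred_eq]; tauto
      · intro f hf hne
        have h5 := h.v1 f hf
        have h6 := h.v2 f hf
        by_cases hfu : f = v
        · subst hfu; simp only [Set.mem_ofPred_eq]; tauto
        · have := h3 f (mem_cut.2 (Or.inr (Or.inr ⟨hf, hfu⟩))) hne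
          simp only [Set.mem_ofPred_eq]; tauto
  · intro e he f hf hef hne
    have heu : e ≠ v := by
      rintro rfl
      exact hne (h.v2 f hf hef.symm).symm
    have hfu : f ≠ v := by
      rintro rfl
      exact hne (h.v2 e he hef)
    obtain ⟨g, hg, hg'⟩ := c.fW e (mem_cut.2 (Or.inr (Or.inr ⟨he, heu⟩))) f
      (mem_cut.2 (Or.inr (Or.inr ⟨hf, hfu⟩))) hef hne
    obtain ⟨k, hk, _, hk'⟩ := h.fromB hg (hg' ▸ (h.b1 e he).1)
    exact ⟨k, hk, by rw [← hk', hg']⟩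
  · intro e he f hf hef hne
    obtain ⟨g, hg, hg'⟩ := c.fE _ (h.mapB he).1 _ (h.mapB hf).1
      (by rw [(h.mapB he).2.1, (h.mapB hf).2.1, hef]) (fun hh => hne (h.injB he hf hh))
    rw [(h.mapB he).2.1] at hg'
    exact ⟨g, (h.fromB2 hg (hg' ▸ (h.b1 e he).2)).1, hg'⟩
  · intro a ha Y
    obtain ⟨h1, h2, h3⟩ := lE (Y := Y) ha
    obtain ⟨e, h4, h5, h6, h7⟩ := lW (Y := Y) ha
    simp only [h3, h7]
    exact ⟨h4, h6, h1, h2⟩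
  · intro a ha hL e he hea
    obtain ⟨e1, h4, h5, h6, h7⟩ := lW (Y := YDir.N) ha
    obtain ⟨e2, k4, k5, k6, k7⟩ := lW (Y := YDir.S) ha
    simp only [h7, k7] at hL ⊢
    subst hL
    have := c.sW a (innB ha) (by rw [h5, k5]) (mp u v e) (h.mapB he).1
      (by rw [(h.mapB he).2.1, hea])
    rw [h5] at this
    exact h.injB he h4 this
  · intro a ha hL e he hea
    simp only [(lE ha).2.2] at hL ⊢
    refine c.sE a (innB ha) hL e (mem_cut.2 (Or.inr (Or.inr ⟨he, ?_⟩))) hea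
    rintro rfl
    exact h.innV (hea ▸ ha)
  · intro Y e f he hf hr hi hj
    have hfu : e ≠ v := by
      rintro rfl
      exact h.innV hi
    have e2 := (h.mapB he).2.2 hfu
    rcases c.dec Y _ _ (h.mapB he).1 (h.mapB hf).1 (h.rchB he hr).2
      (by rw [e2]; exact innB hi) (by rw [(h.mapB hf).2.1]; exact innB hj) with h1 | h1
    · left
      rw [e2] at h1
      simp only [h1]
      conv_lhs => rw [← e2]
      exact h.bkB he
    · right
      rw [(h.mapB hf).2.1] at h1
      simp only [h1]
      exact h.bkB hf

theorem split_lrelA {A B : DG} {u v : ℕ × ℕ} (h : JD A B u v) {L : Lab}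
    (c : Core (DG.cut A B u v) L) : LRel A u v (fun x Y X => bk u v u (L x Y X)) L := by
  intro x hx Y X
  have := c.prop x ((h.innA (inn_mem h.a1 hx)).2 hx) Y
  cases X
  · exact (h.mpbk this.1 (Or.inl rfl)).symm
  · exact (h.mpbk this.2.2.1 (Or.inl rfl)).symm

theorem split_lrelB {A B : DG} {u v : ℕ × ℕ} (h : JD A B u v) {L : Lab}
    (c : Core (DG.cut A B u v) L) : LRel B u v (fun x Y X => bk u v v (L x Y X)) L := by
  intro x hx Y X
  have := c.prop x ((h.innB (inn_mem h.b1 hx)).2 hx) Y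
  cases X
  · exact (h.mpbk this.1 (Or.inr rfl)).symm
  · exact (h.mpbk this.2.2.1 (Or.inr rfl)).symm

theorem split_xyc {A B : DG} {u v : ℕ × ℕ} (h : JD A B u v) {LA LB L : Lab}
    (c : Core (DG.cut A B u v) L)
    (cA : Core A LA) (cB : Core B LB) {εA εB : DistE}
    (iA : Inv A LA εA) (iB : Inv B LB εB) (hLA : LRel A u v LA L) (hLB : LRel B u v LB L)
    (Y : YDir) : u = εA Y XDir.E ∨ v = εB Y XDir.W := by
  by_contra hcon
  push Not at hcon
  obtain ⟨e, he, hi, hr, hb⟩ := iA.twoE Y u h.uA h.u1 hcon.1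
  obtain ⟨f, hf, hj, hs, hc⟩ := iB.twoW Y v h.vB h.v1 hcon.2
  have r1 := (h.rchA he hr).2
  have r2 := (h.rchB h.vB hs).2
  rw [h.mpu] at r1
  rcases c.dec Y _ _ (h.mapA he).1 (h.mapB hf).1 (r1.trans r2)
    (by rw [(h.mapA he).2.1]; exact (h.innA (h.a1 e he).1).2 hi)
    (by rw [(h.mapB hf).2.1]; exact (h.innB (h.b1 f hf).2).2 hj) with h1 | h1
  · rw [(h.mapA he).2.1, hLA _ hi] at h1
    exact hb (h.injA (cA.prop _ hi Y).2.2.1 he h1)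
  · rw [(h.mapB hf).2.1, hLB _ hj] at h1
    exact hc (h.injB (cB.prop _ hj Y).1 hf h1)

theorem split_exists {D : DG} {L : Lab} (c : Core D L) {a d : ℕ} (hE : (a, d) ∈ D.edges) :
    ∃ A B u v, JD A B u v ∧ D = DG.cut A B u v ∧ u.1 = a ∧ v.2 = d := by
  classical
  obtain ⟨S, haS, hdS, hS⟩ := c.tree _ hE
  simp only at haS hdS
  obtain ⟨hD1, hD2, hD3, hD4⟩ := c.ori
  have hav := hD1 _ hE
  obtain ⟨b, hb⟩ := D.verts.exists_notMem
  obtain ⟨k, hk⟩ := (insert b D.verts).exists_notMem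
  simp only [Finset.mem_insert, not_or] at hk
  let A : DG := ⟨insert b (D.verts.filter (· ∈ S)), insert (a, b) (D.edges.filter (·.2 ∈ S))⟩
  let B : DG := ⟨insert k (D.verts.filter (· ∉ S)), insert (k, d) (D.edges.filter (·.1 ∉ S))⟩
  have mA : ∀ e, e ∈ A.edges ↔ e = (a, b) ∨ (e ∈ D.edges ∧ e.1 ∈ S ∧ e.2 ∈ S) := by
    intro e
    have := hS e
    simp only [A, Finset.mem_insert, Finset.mem_filter]
    grind
  have mB : ∀ e, e ∈ B.edges ↔ e = (k, d) ∨ (e ∈ D.edges ∧ e.1 ∉ S ∧ e.2 ∉ S) := by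
    intro e
    have := hS e
    simp only [B, Finset.mem_insert, Finset.mem_filter]
    grind
  have vA : ∀ x, x ∈ A.verts ↔ x = b ∨ (x ∈ D.verts ∧ x ∈ S) := by
    intro x; simp [A]
  have vB : ∀ x, x ∈ B.verts ↔ x = k ∨ (x ∈ D.verts ∧ x ∉ S) := by
    intro x; simp [B]
  have hba : a ≠ b := by rintro rfl; exact hb hav.1
  have hkd : k ≠ d := by rintro rfl; exact hk.2 hav.2
  have a1 : ∀ e ∈ A.edges, e.1 ∈ A.verts ∧ e.2 ∈ A.verts := by
    intro e he
    rw [mA] at he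
    rw [vA, vA]
    have := hD1 e
    grind
  have b1 : ∀ e ∈ B.edges, e.1 ∈ B.verts ∧ e.2 ∈ B.verts := by
    intro e he
    rw [mB] at he
    rw [vB, vB]
    have := hD1 e
    grind
  have j : JD A B (a, b) (k, d) := by
    refine ⟨a1, b1, ⟨a1, ?_, ?_, ⟨b, by simp [vA]⟩⟩, ⟨b1, ?_, ?_, ⟨k, by simp [vB]⟩⟩, ?_, ?_, ?_,
      ?_, ?_, ?_, ?_⟩
    · intro e he
      rw [mA] at he
      have := hD2 e
      grind
    · intro x y h1 h2
      rw [mA] at h1 h2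
      have := hD3 x y
      have := hD1 (x, y)
      have := hD1 (y, x)
      grind
    · intro e he
      rw [mB] at he
      have := hD2 e
      grind
    · intro x y h1 h2
      rw [mB] at h1 h2
      have := hD3 x y
      have := hD1 (x, y)
      have := hD1 (y, x)
      grind
    · intro x h1 h2
      rw [vA] at h1
      rw [vB] at h2
      grind
    · rw [mA]; exact Or.inl rfl
    · intro e he
      rw [mA] at he
      have := hD1 e
      grind
    · intro e he
      rw [mA] at he
      have := hD1 e
      grind
    · rw [mB]; exact Or.inl rfl
    · intro e he
      rw [mB] at he
      have := hD1 e
      grind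
    · intro e he
      rw [mB] at he
      have := hD1 e
      grind
  refine ⟨A, B, (a, b), (k, d), j, ?_, rfl, rfl⟩
  have e1 : D.verts = (DG.cut A B (a, b) (k, d)).verts := by
    ext x
    rw [vmem_cut j, vA, vB]
    grind
  have e2 : D.edges = (DG.cut A B (a, b) (k, d)).edges := by
    ext e
    rw [mem_cut, mA, mB]
    have := hS e
    have := hD1 e
    grind
  cases D
  simp only at e1 e2
  rw [e1, e2]

theorem inn_of_basic {D : DG} {b : ℕ} (ho : D.IsOriented)
    (h1 : ∀ e ∈ D.edges, e.1 = b ∨ e.2 = b) {x : ℕ} (hx : Inn D x) : x = b := by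
  obtain ⟨⟨⟨e1, e2⟩, he, rfl⟩, ⟨⟨f1, f2⟩, hf, hfe⟩⟩ := hx
  have := h1 _ he
  have := h1 _ hf
  have := ho.2.2.1 e1 e2
  grind

theorem rch_of_basicE {D : DG} {b : ℕ} (ho : D.IsOriented)
    (h1 : ∀ e ∈ D.edges, e.1 = b ∨ e.2 = b) {e f : ℕ × ℕ} (he : e ∈ D.edges) (heb : e.1 = b)
    (hr : Rch D e f) : f = e := by
  induction hr with
  | refl => rfl
  | @tail x y _ hxy ih =>
    exfalso
    subst ih
    obtain ⟨e1, e2⟩ := x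
    obtain ⟨f1, f2⟩ := y
    have := h1 _ hxy.2
    have := ho.2.1 _ he
    have := ho.2.2.1 e1 e2
    grind

theorem rch_of_basicW {D : DG} {b : ℕ} (ho : D.IsOriented)
    (h1 : ∀ e ∈ D.edges, e.1 = b ∨ e.2 = b) {e f : ℕ × ℕ} (he : e ∈ D.edges)
    (hfb : f.2 = b) (hr : Rch D e f) : e = f := by
  rcases h1 e he with h | h
  · exact (rch_of_basicE ho h1 he h hr).symm
  · rcases Relation.ReflTransGen.cases_head hr with h2 | ⟨g, hg, hgf⟩
    · exact h2
    · have : g.1 = b := by rw [← hg.1, h]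
      have h3 := rch_of_basicE ho h1 hg.2 this hgf
      subst h3
      exact (ho.2.1 _ hg.2 (by rw [this, hfb])).elim

theorem basic_inv {D : DG} {b : ℕ} {L : Lab} {ε : DistE} (ho : D.IsOriented)
    (h1 : ∀ e ∈ D.edges, e.1 = b ∨ e.2 = b)
    (h3 : ∃ a, (a, b) ∈ D.edges) (h4 : ∃ c, (b, c) ∈ D.edges)
    (h5 : ∀ Y : YDir, ε Y XDir.W ∈ D.edges ∧ (ε Y XDir.W).2 = b ∧
      ε Y XDir.E ∈ D.edges ∧ (ε Y XDir.E).1 = b) (hL : ∀ Y X, L b Y X = ε Y X) :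
    Inv D L ε := by
  have hib : Inn D b := by
    obtain ⟨a, ha⟩ := h3
    obtain ⟨c, hc⟩ := h4
    exact ⟨⟨_, ha, rfl⟩, ⟨_, hc, rfl⟩⟩
  have hino : ∀ x, Inn D x → x = b := fun x hx => inn_of_basic ho h1 hx
  have hout : ∀ e ∈ D.edges, e.1 = b → ∀ f ∈ D.edges, f.1 ≠ e.2 := by
    intro e he heb f hf hfe
    have := rch_of_basicE ho h1 he heb (Relation.ReflTransGen.single ⟨hfe.symm, hf⟩)
    subst this
    exact ho.2.1 _ hf hfe
  have hin : ∀ e ∈ D.edges, e.2 = b → ∀ f ∈ D.edges, f.2 ≠ e.1 := by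
    intro e he heb f hf hfe
    have := rch_of_basicW ho h1 hf heb (Relation.ReflTransGen.single ⟨hfe, he⟩)
    subst this
    exact ho.2.1 _ hf hfe.symm
  refine ⟨?_, ?_, ?_, ?_, ?_, ?_, ?_⟩
  · intro Y
    obtain ⟨k1, k2, k3, k4⟩ := h5 Y
    exact ⟨k1, hin _ k1 k2, k2 ▸ hib⟩
  · intro Y
    obtain ⟨k1, k2, k3, k4⟩ := h5 Y
    exact ⟨k3, hout _ k3 k4, k4 ▸ hib⟩
  · intro Y e he hi hr
    have heb := hino _ hi
    rw [heb, hL]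
    exact rch_of_basicE ho h1 he heb hr
  · intro Y e he hi hr
    have heb := hino _ hi
    rw [heb, hL]
    exact rch_of_basicW ho h1 (h5 Y).1 heb hr
  · intro Y f hf hfE hne
    have hfb : f.1 = b := by
      rcases h1 f hf with h | h
      · exact h
      · exact (hfE _ (h5 Y).2.2.1 (by rw [h, (h5 Y).2.2.2])).elim
    refine ⟨f, hf, hfb ▸ hib, Relation.ReflTransGen.refl, ?_⟩
    rw [hfb, hL]; exact hne.symm
  · intro Y f hf hfE hne
    have hfb : f.2 = b := by
      rcases h1 f hf with h | h
      · exact (hfE _ (h5 Y).1 (by rw [h, (h5 Y).2.1])).elim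
      · exact h
    refine ⟨f, hf, hfb ▸ hib, Relation.ReflTransGen.refl, ?_⟩
    rw [hfb, hL]; exact hne.symm
  · intro Y
    obtain ⟨k1, k2, k3, k4⟩ := h5 Y
    exact Relation.ReflTransGen.single ⟨by rw [k2, k4], k3⟩

theorem sep_card (s : Finset (ℕ × ℕ)) (P : ℕ × ℕ → Prop) [DecidablePred P] (x y : ℕ × ℕ)
    (hx : x ∈ s) (hxP : P x) (hy : y ∈ s) (hyP : P y) :
    (2 ≤ (s.filter P).card → x ≠ y) ↔ (x = y → ∀ e ∈ s, P e → e = x) := by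
  constructor
  · intro h hxy e he hP
    by_contra hne
    refine h ?_ hxy
    exact Finset.one_lt_card.2 ⟨e, by simp [he, hP], x, by simp [hx, hxP], hne⟩
  · intro h hc hxy
    obtain ⟨e, he, f, hf, hne⟩ := Finset.one_lt_card.1 hc
    simp only [Finset.mem_filter] at he hf
    exact hne ((h hxy e he.1 he.2).trans (h hxy f hf.1 hf.2).symm)

theorem basic_core {D : DG} {ε : DistE} (h : IsBasicK D ε) :
    Core D (fun _ => ε) ∧ Inv D (fun _ => ε) ε := by
  obtain ⟨ho, b, hb, h1, h2, h3, h4, h5, h6, h7⟩ := h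
  refine ⟨?_, basic_inv ho h1 h3 h4 h5 (fun _ _ => rfl)⟩
  have hib : Inn D b := by
    obtain ⟨a, ha⟩ := h3
    obtain ⟨c, hc⟩ := h4
    exact ⟨⟨_, ha, rfl⟩, ⟨_, hc, rfl⟩⟩
  rw [sep_card _ _ _ _ (h5 _).1 (h5 _).2.1 (h5 _).1 (h5 _).2.1] at h6
  rw [sep_card _ _ _ _ (h5 _).2.2.1 (h5 _).2.2.2 (h5 _).2.2.1 (h5 _).2.2.2] at h7
  have hino : ∀ x, Inn D x → x = b := fun x hx => inn_of_basic ho h1 hx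
  refine ⟨ho, ?_, ?_, ?_, ?_, ⟨b, hib⟩, ?_, ?_, ?_, ?_⟩
  · intro S hS
    have key : ∀ x ∈ D.verts, x ∈ S ↔ b ∈ S := by
      intro x hx
      rcases h2 x hx with rfl | h | h
      · rfl
      · exact hS _ h
      · exact (hS _ h).symm
    intro x hx y hy hxS
    rw [key y hy, ← key x hx]; exact hxS
  · rintro ⟨e1, e2⟩ he
    have hne := ho.2.1 _ he
    have ha := ho.2.2.1
    rcases h1 _ he with h | h
    · refine ⟨{x | x ≠ e2}, hne, by simp, ?_⟩
      rintro ⟨f1, f2⟩ hf hfe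
      have := h1 _ hf
      have := ho.2.1 _ hf
      simp only [Set.mem_ofPred_eq]
      grind
    · refine ⟨{x | x = e1}, rfl, Ne.symm hne, ?_⟩
      rintro ⟨f1, f2⟩ hf hfe
      have := h1 _ hf
      have := ho.2.1 _ hf
      simp only [Set.mem_ofPred_eq]
      grind
  · rintro ⟨e1, e2⟩ he ⟨f1, f2⟩ hf hef hne
    have := h1 _ he
    have := h1 _ hf
    obtain ⟨a, ha⟩ := h3
    refine ⟨_, ha, ?_⟩
    grind
  · rintro ⟨e1, e2⟩ he ⟨f1, f2⟩ hf hef hne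
    have := h1 _ he
    have := h1 _ hf
    obtain ⟨a, ha⟩ := h4
    refine ⟨_, ha, ?_⟩
    grind
  · intro a ha Y
    rw [hino a ha]; exact h5 Y
  · intro a ha hL e he hea
    exact h6 hL e he (hea.trans (hino a ha))
  · intro a ha hL e he hea
    exact h7 hL e he (hea.trans (hino a ha))
  · intro Y e f he hf hr hi hj
    have e1 := hino _ hi
    have e2 := hino _ hj
    have := rch_of_basicE ho h1 he e1 hr
    subst this
    exact (ho.2.1 _ he (by rw [e1, e2])).elim

theorem core_basic {D : DG} {L : Lab} (c : Core D L)
    (hno : ∀ e ∈ D.edges, Inn D e.1 → Inn D e.2 → False) :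
    ∃ ε, IsBasicK D ε ∧ Inv D L ε := by
  obtain ⟨b, hb⟩ := c.inn
  have ho := c.ori
  have hbv := inn_mem ho.1 hb
  have n1 : ∀ x y, (x, b) ∈ D.edges → (x, y) ∈ D.edges → y = b := by
    intro x y h1 h2
    by_contra hne
    obtain ⟨g, hg, hg'⟩ := c.fW _ h2 _ h1 rfl (by simpa using hne)
    exact hno _ h1 ⟨⟨g, hg, hg'⟩, ⟨_, h1, rfl⟩⟩ hb
  have n2 : ∀ x y, (b, x) ∈ D.edges → (y, x) ∈ D.edges → y = b := by
    intro x y h1 h2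
    by_contra hne
    obtain ⟨g, hg, hg'⟩ := c.fE _ h2 _ h1 rfl (by simpa using hne)
    exact hno _ h1 hb ⟨⟨_, h1, rfl⟩, ⟨g, hg, hg'⟩⟩
  have n3 : ∀ x y, (x, b) ∈ D.edges → (y, x) ∈ D.edges → False := by
    intro x y h1 h2
    exact hno _ h1 ⟨⟨_, h2, rfl⟩, ⟨_, h1, rfl⟩⟩ hb
  have n4 : ∀ x y, (b, x) ∈ D.edges → (x, y) ∈ D.edges → False := by
    intro x y h1 h2
    exact hno _ h1 hb ⟨⟨_, h1, rfl⟩, ⟨_, h2, rfl⟩⟩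
  have hall : ∀ v ∈ D.verts, v = b ∨ (v, b) ∈ D.edges ∨ (b, v) ∈ D.edges := by
    intro v hv
    have := c.conn {v | v = b ∨ (v, b) ∈ D.edges ∨ (b, v) ∈ D.edges} (by
      rintro ⟨x, y⟩ he
      simp only [Set.mem_ofPred_eq]
      grind) b hbv v hv (Or.inl rfl)
    exact this
  have hedge : ∀ e ∈ D.edges, e.1 = b ∨ e.2 = b := by
    rintro ⟨x, y⟩ he
    have := hall x (ho.1 _ he).1
    simp only
    grind
  have h3 : ∃ a, (a, b) ∈ D.edges := by
    obtain ⟨⟨⟨x, y⟩, he, rfl⟩, _⟩ := hb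
    exact ⟨x, he⟩
  have h4 : ∃ a, (b, a) ∈ D.edges := by
    obtain ⟨_, ⟨⟨x, y⟩, he, rfl⟩⟩ := hb
    exact ⟨y, he⟩
  have h5 := c.prop b hb
  refine ⟨L b, ⟨ho, b, hbv, hedge, hall, h3, h4, h5, ?_, ?_⟩,
    basic_inv ho hedge h3 h4 h5 (fun _ _ => rfl)⟩
  · rw [sep_card _ _ _ _ (h5 _).1 (h5 _).2.1 (h5 _).1 (h5 _).2.1]
    exact c.sW b hb
  · rw [sep_card _ _ _ _ (h5 _).2.2.1 (h5 _).2.2.2 (h5 _).2.2.1 (h5 _).2.2.2]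
    exact c.sE b hb

theorem construction_core {G : CTree} (hG : IsConstruction G) :
    ∃ L, Core G.rootGraph L ∧ Inv G.rootGraph L G.dist := by
  induction hG with
  | leaf D ε h => exact ⟨_, basic_core h⟩
  | node D ε u v GW GE hW hE hdisj heW heE hD hXYC hεW hεE ihW ihE =>
    obtain ⟨LA, cA, iA⟩ := ihW
    obtain ⟨LB, cB, iB⟩ := ihE
    have j : JD GW.rootGraph GE.rootGraph u v := by
      refine ⟨cA.ori.1, cB.ori.1, cA.ori, cB.ori, ?_, heW.1.1, ?_, ?_, heE.1.1, ?_, ?_⟩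
      · intro x h1 h2
        exact Finset.disjoint_left.1 hdisj h1 h2
      · intro e he h
        exact heW.1.2.2 e.2 (by rw [← h]; exact he)
      · intro e he h
        exact Prod.ext (heW.2 e.1 (by rw [← h]; exact he)) h
      · intro e he h
        exact heE.1.2.2 e.1 (by rw [← h]; exact he)
      · intro e he h
        exact Prod.ext h (heE.2 e.2 (by rw [← h]; exact he))
    classical
    let L : Lab := fun x Y X =>
      mp u v (if x ∈ GW.rootGraph.verts then LA x Y X else LB x Y X)
    have hLA : LRel GW.rootGraph u v LA L := by
      intro x hx Y X
      simp only [L, if_pos (inn_mem j.a1 hx)]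
    have hLB : LRel GE.rootGraph u v LB L := by
      intro x hx Y X
      have : x ∉ GW.rootGraph.verts := fun h => j.disj x h (inn_mem j.b1 hx)
      simp only [L, if_neg this]
    subst hD
    exact ⟨L, join_core j cA cB iA iB hLA hLB hXYC,
      join_inv j cA cB iA iB hLA hLB hXYC hεW hεE⟩

open Classical in
theorem core_construction (n : ℕ) : ∀ (D : DG) (L : Lab), Core D L →
    (D.verts.filter (fun x => Inn D x)).card = n →
    ∃ G : CTree, IsConstruction G ∧ G.rootGraph = D ∧ Inv D L G.dist := by
  induction n using Nat.strong_induction_on with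
  | _ n ih =>
  intro D L c hn
  by_cases hno : ∀ e ∈ D.edges, Inn D e.1 → Inn D e.2 → False
  · obtain ⟨ε, h1, h2⟩ := core_basic c hno
    exact ⟨.leaf D ε, .leaf D ε h1, rfl, h2⟩
  · push Not at hno
    obtain ⟨⟨a, d⟩, he, hia, hid, -⟩ := hno
    obtain ⟨A, B, u, v, j, rfl, rfl, rfl⟩ := split_exists c he
    simp only at hia hid
    have cA := split_coreA j c hia
    have cB := split_coreB j c hid
    have lA := split_lrelA j c
    have lB := split_lrelB j c
    have huA := j.a1 u j.uA
    have hvB := j.b1 v j.vB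
    have sA : (A.verts.filter (fun x => Inn A x)).card < n := by
      rw [← hn]
      apply Finset.card_lt_card
      rw [Finset.ssubset_iff_of_subset]
      · refine ⟨v.2, ?_, ?_⟩
        · simp only [Finset.mem_filter]; exact ⟨inn_mem c.ori.1 hid, hid⟩
        · simp only [Finset.mem_filter]; intro h; exact j.disj _ h.1 hvB.2
      · intro x
        simp only [Finset.mem_filter]
        rintro ⟨h1, h2⟩
        have := (j.innA h1).2 h2
        exact ⟨inn_mem c.ori.1 this, this⟩
    have sB : (B.verts.filter (fun x => Inn B x)).card < n := by
      rw [← hn]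
      apply Finset.card_lt_card
      rw [Finset.ssubset_iff_of_subset]
      · refine ⟨u.1, ?_, ?_⟩
        · simp only [Finset.mem_filter]; exact ⟨inn_mem c.ori.1 hia, hia⟩
        · simp only [Finset.mem_filter]; intro h; exact j.disj _ huA.1 h.1
      · intro x
        simp only [Finset.mem_filter]
        rintro ⟨h1, h2⟩
        have := (j.innB h1).2 h2
        exact ⟨inn_mem c.ori.1 this, this⟩
    obtain ⟨GA, gA, rA, iA⟩ := ih _ sA A _ cA rfl
    obtain ⟨GB, gB, rB, iB⟩ := ih _ sB B _ cB rfl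
    have hXYC := split_xyc j c cA cB iA iB lA lB
    let ε : DistE := fun Y X =>
      match X with
      | .W => if v = GB.dist Y XDir.W then GA.dist Y XDir.W else GB.dist Y XDir.W
      | .E => if u = GA.dist Y XDir.E then GB.dist Y XDir.E else GA.dist Y XDir.E
    have iD : Inv (DG.cut A B u v) L ε :=
      join_inv j cA cB iA iB lA lB hXYC (fun _ => rfl) (fun _ => rfl)
    refine ⟨.node (DG.cut A B u v) ε u v GA GB, ?_, rfl, iD⟩
    refine .node _ _ u v GA GB gA gB ?_ ?_ ?_ ?_ hXYC (fun _ => rfl) (fun _ => rfl)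
    · rw [rA, rB]
      exact Finset.disjoint_left.2 (fun x h1 h2 => j.disj x h1 h2)
    · rw [rA]
      exact ⟨⟨j.uA, huA.2, fun b hb => j.u1 _ hb rfl⟩,
        fun x hx => congrArg Prod.fst (j.u2 _ hx rfl)⟩
    · rw [rB]
      exact ⟨⟨j.vB, hvB.1, fun b hb => j.v1 _ hb rfl⟩,
        fun x hx => congrArg Prod.snd (j.v2 _ hx rfl)⟩
    · rw [rA, rB]

/-! ### Comparison with the list-based definitions -/

theorem isInner_iff {D : DG} (h : D.IsOriented) {a : ℕ} : D.isInner a ↔ Inn D a := by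
  constructor
  · rintro ⟨_, ⟨b, hb⟩, ⟨c, hc⟩⟩
    exact ⟨⟨_, hb, rfl⟩, ⟨_, hc, rfl⟩⟩
  · intro hi
    refine ⟨inn_mem h.1 hi, ?_, ?_⟩
    · obtain ⟨⟨⟨x, y⟩, he, rfl⟩, _⟩ := hi
      exact ⟨x, he⟩
    · obtain ⟨_, ⟨⟨x, y⟩, he, rfl⟩⟩ := hi
      exact ⟨y, he⟩

theorem chain_inv {R : ℕ → ℕ → Prop} {S : Set ℕ} : ∀ (l : List ℕ) (a b : ℕ),
    (∀ x ∈ l, ∀ y ∈ l, R x y → (x ∈ S ↔ y ∈ S)) → l.IsChain R → l.head? = some a →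
    l.getLast? = some b → (a ∈ S ↔ b ∈ S)
  | [], a, b, _, _, h, _ => by simp at h
  | [x], a, b, _, _, h1, h2 => by
    simp at h1 h2
    rw [← h1, ← h2]
  | x :: y :: t, a, b, hR, hc, h1, h2 => by
    rw [List.isChain_cons_cons] at hc
    have ih := chain_inv (y :: t) y b
      (fun u hu v hv => hR u (List.mem_cons_of_mem _ hu) v (List.mem_cons_of_mem _ hv))
      hc.2 rfl (by rw [List.getLast?_cons_cons] at h2; exact h2)
    simp at h1
    subst h1
    exact (hR x (by simp) y (by simp) hc.1).trans ih

theorem chain_rch {D : DG} : ∀ (t : List ℕ) (a b : ℕ),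
    (a :: b :: t).IsChain (fun a b => (a, b) ∈ D.edges) →
    ∃ c d t', (a :: b :: t).reverse = d :: c :: t' ∧ (c, d) ∈ D.edges ∧ Rch D (a, b) (c, d)
  | [], a, b, h => ⟨a, b, [], by simp, by simpa using h, Relation.ReflTransGen.refl⟩
  | x :: t, a, b, h => by
    rw [List.isChain_cons_cons] at h
    obtain ⟨c, d, t', h1, h2, h3⟩ := chain_rch t b x h.2
    refine ⟨c, d, t' ++ [a], ?_, h2, ?_⟩
    · rw [List.reverse_cons, h1]; rfl
    · refine Relation.ReflTransGen.head ⟨rfl, ?_⟩ h3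
      have := h.2
      rw [List.isChain_cons_cons] at this
      exact this.1

theorem rch_cut {D : DG}
    (ht : ∀ e ∈ D.edges, ∃ S : Set ℕ, e.1 ∈ S ∧ e.2 ∉ S ∧
      ∀ f ∈ D.edges, f ≠ e → (f.1 ∈ S ↔ f.2 ∈ S))
    {p r : ℕ × ℕ} (hp : p ∈ D.edges) (h : Rch D p r) : p.1 ≠ r.2 := by
  obtain ⟨S, h1, h2, h3⟩ := ht p hp
  have key : r.2 ∉ S := by
    induction h with
    | refl => exact h2
    | tail _ hbc ih =>
      rename_i b c _
      have hne : c ≠ p := by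
        rintro rfl
        exact ih (hbc.1 ▸ h1)
      rw [← h3 c hbc.2 hne, ← hbc.1]
      exact ih
  intro hh
  exact key (hh ▸ h1)

theorem rch_path {D : DG}
    (ht : ∀ e ∈ D.edges, ∃ S : Set ℕ, e.1 ∈ S ∧ e.2 ∉ S ∧
      ∀ f ∈ D.edges, f ≠ e → (f.1 ∈ S ↔ f.2 ∈ S))
    {e f : ℕ × ℕ} (h : Rch D e f) : e ∈ D.edges →
    ∃ t t', (e.1 :: e.2 :: t).reverse = f.2 :: f.1 :: t' ∧
      (e.1 :: e.2 :: t).IsChain (fun a b => (a, b) ∈ D.edges) ∧ (e.1 :: e.2 :: t).Nodup ∧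
      ∀ x ∈ e.2 :: t, ∃ r ∈ D.edges, Rch D e r ∧ x = r.2 := by
  induction h using Relation.ReflTransGen.head_induction_on with
  | refl =>
    intro hf
    refine ⟨[], [], by simp, by simpa using hf, ?_, ?_⟩
    · simpa using rch_cut ht hf Relation.ReflTransGen.refl
    · intro x hx
      simp at hx
      exact ⟨f, hf, Relation.ReflTransGen.refl, hx⟩
  | head hpq _ ih =>
    rename_i p q _
    intro hp
    obtain ⟨t, t', h1, h2, h3, h4⟩ := ih hpq.2
    have hm : ∀ x ∈ p.2 :: q.2 :: t, ∃ r ∈ D.edges, Rch D p r ∧ x = r.2 := by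
      intro x hx
      rcases List.mem_cons.1 hx with rfl | hx
      · exact ⟨p, hp, Relation.ReflTransGen.refl, rfl⟩
      · obtain ⟨r, hr, hr1, hr2⟩ := h4 x hx
        exact ⟨r, hr, Relation.ReflTransGen.head hpq hr1, hr2⟩
    refine ⟨q.2 :: t, t' ++ [p.1], ?_, ?_, ?_, hm⟩
    · rw [List.reverse_cons, hpq.1, h1]; rfl
    · rw [List.isChain_cons_cons]
      exact ⟨hp, by rw [hpq.1]; exact h2⟩
    · rw [List.nodup_cons]
      refine ⟨?_, by rw [hpq.1]; exact h3⟩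
      intro hx
      obtain ⟨r, hr, hr1, hr2⟩ := hm _ hx
      exact rch_cut ht hp hr1 hr2

theorem reach_mem {G : SimpleGraph ℕ} {V : Set ℕ} (hG : ∀ x y, G.Adj x y → y ∈ V) {a x : ℕ}
    (ha : a ∈ V) (h : G.Reachable a x) : x ∈ V := by
  obtain ⟨p⟩ := h
  induction p with
  | nil => exact ha
  | cons hadj p ih => exact ih (hG _ _ hadj)

theorem tree_of_asemi {D : DG} (ho : D.IsOriented) (ha : D.Asemicyclic) :
    ∀ e ∈ D.edges, ∃ S : Set ℕ, e.1 ∈ S ∧ e.2 ∉ S ∧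
      ∀ f ∈ D.edges, f ≠ e → (f.1 ∈ S ↔ f.2 ∈ S) := by
  rintro ⟨a, b⟩ he
  obtain ⟨G, hG⟩ : ∃ G : SimpleGraph ℕ, G = SimpleGraph.fromRel
    (fun x y => (x, y) ∈ D.edges ∧ (x, y) ≠ (a, b)) := ⟨_, rfl⟩
  have hadj : ∀ x y, G.Adj x y ↔ x ≠ y ∧ (((x, y) ∈ D.edges ∧ (x, y) ≠ (a, b)) ∨
      ((y, x) ∈ D.edges ∧ (y, x) ≠ (a, b))) := by
    intro x y
    rw [hG, SimpleGraph.fromRel_adj]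
  have hab : a ≠ b := ho.2.1 _ he
  refine ⟨{x | G.Reachable a x}, SimpleGraph.Reachable.refl a, ?_, ?_⟩
  · intro hr
    change G.Reachable a b at hr
    obtain ⟨p, hp⟩ := hr.exists_isPath
    refine ha (p.support ++ [a]) ⟨?_, ?_, ?_, ?_, ?_⟩
    · rw [List.length_append, SimpleGraph.Walk.length_support]
      have h0 : p.length ≠ 0 := fun h0 => hab (SimpleGraph.Walk.eq_of_length_eq_zero h0)
      have h1 : p.length ≠ 1 := by
        intro h1
        have := (hadj a b).1 (SimpleGraph.Walk.adj_of_length_eq_one h1)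
        rcases this.2 with h | h
        · exact h.2 rfl
        · exact ho.2.2.1 _ _ he h.1
      simp
      omega
    · intro x hx
      have hav : a ∈ D.verts := (ho.1 _ he).1
      rcases List.mem_append.1 hx with hx | hx
      · refine reach_mem (V := (D.verts : Set ℕ)) (G := G) ?_ hav (p.takeUntil x hx).reachable
        intro u v huv
        rcases ((hadj u v).1 huv).2 with h | h
        · exact (ho.1 _ h.1).2
        · exact (ho.1 _ h.1).1
      · simp at hx
        rw [hx]; exact hav
    · rw [List.getLast?_concat]
      cases p <;> simp
    · rw [List.dropLast_concat]
      exact hp.support_nodup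
    · refine List.isChain_append.2 ⟨?_, by simp, ?_⟩
      · refine p.isChain_adj_support.imp ?_
        intro x y hxy
        rcases ((hadj x y).1 hxy).2 with h | h
        · exact Or.inl h.1
        · exact Or.inr h.1
      · intro x hx y hy
        rw [List.getLast?_eq_some_getLast p.support_ne_nil, SimpleGraph.Walk.getLast_support] at hx
        simp at hx hy
        subst hx; subst hy
        exact Or.inr he
  · rintro ⟨x, y⟩ hf hne
    have hxy : G.Adj x y := (hadj x y).2 ⟨ho.2.1 _ hf, Or.inl ⟨hf, hne⟩⟩
    exact ⟨fun h => SimpleGraph.Reachable.trans h hxy.reachable,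
      fun h => SimpleGraph.Reachable.trans h hxy.symm.reachable⟩

theorem toCore {D : DG} {L : Lab} (h : IsLocalCompass D L) : Core D L := by
  obtain ⟨ho, hp, hw, ha, hf, hi, hs, hd⟩ := h
  have ht := tree_of_asemi ho ha
  have hp' : ∀ a, Inn D a → ∀ Y, L a Y XDir.W ∈ D.edges ∧ (L a Y XDir.W).2 = a ∧
      L a Y XDir.E ∈ D.edges ∧ (L a Y XDir.E).1 = a :=
    fun a hia => hp a ((isInner_iff ho).2 hia)
  refine ⟨ho, ?_, ht, ?_, ?_, ?_, hp', ?_, ?_, ?_⟩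
  · intro S hS x hx y hy hxS
    obtain ⟨l, hl, h1, h2⟩ := hw x hx y hy
    refine (chain_inv l x y ?_ hl.2.2.2 h1 h2).1 hxS
    intro u _ v _ huv
    rcases huv with h | h
    · exact hS _ h
    · exact (hS _ h).symm
  · rintro ⟨a, b⟩ he ⟨a', c⟩ hc hac hne
    simp only at hac
    subst hac
    by_contra hcon
    have := (hf.1 (a, b) ⟨he, (ho.1 _ he).1, fun z hz => hcon ⟨_, hz, rfl⟩⟩).2 c hc
    exact hne (by rw [this])
  · rintro ⟨b, a⟩ he ⟨c, a'⟩ hc hac hne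
    simp only at hac
    subst hac
    by_contra hcon
    have := (hf.2 (b, a) ⟨he, (ho.1 _ he).2, fun z hz => hcon ⟨_, hz, rfl⟩⟩).2 c hc
    exact hne (by rw [this])
  · obtain ⟨a, hia⟩ := hi
    exact ⟨a, (isInner_iff ho).1 hia⟩
  · intro a hia
    exact (sep_card D.edges (fun e => e.2 = a) _ _ (hp' a hia _).1 (hp' a hia _).2.1
      (hp' a hia _).1 (hp' a hia _).2.1).1 (hs a ((isInner_iff ho).2 hia)).1
  · intro a hia
    exact (sep_card D.edges (fun e => e.1 = a) _ _ (hp' a hia _).2.2.1 (hp' a hia _).2.2.2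
      (hp' a hia _).2.2.1 (hp' a hia _).2.2.2).1 (hs a ((isInner_iff ho).2 hia)).2
  · intro Y e f he hfe hr _ _
    obtain ⟨t, t', h1, h2, h3, h4⟩ := rch_path ht hr he
    have hpath : D.IsPath (e.1 :: e.2 :: t) := by
      refine ⟨by simp, ?_, h3, h2⟩
      intro x hx
      rcases List.mem_cons.1 hx with rfl | hx
      · exact (ho.1 _ he).1
      · obtain ⟨r, hr, _, rfl⟩ := h4 x hx
        exact (ho.1 _ hr).2
    have hY : Ydecent L Y (e.1 :: e.2 :: t) := by
      cases Y
      · exact (hd _ hpath).1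
      · exact (hd _ hpath).2
    rcases hY _ _ _ rfl with h | ⟨c, d, t'', h5, h6⟩
    · exact Or.inl h
    · rw [h1] at h5
      simp only [List.cons.injEq] at h5
      right
      rw [h5.1, h6, ← h5.1, ← h5.2.1]

theorem asemi_of_core {D : DG} {L : Lab} (c : Core D L) : D.Asemicyclic := by
  rintro l ⟨hlen, _, hhl, hnd, hch⟩
  obtain ⟨a, l, rfl⟩ := List.exists_cons_of_length_pos (show 0 < l.length by omega)
  rw [List.length_cons] at hlen
  obtain ⟨b, l, rfl⟩ := List.exists_cons_of_length_pos (show 0 < l.length by omega)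
  rw [List.length_cons] at hlen
  rcases List.eq_nil_or_concat l with rfl | ⟨l, w, rfl⟩
  · simp at hlen
  rw [List.concat_eq_append, List.length_append] at hlen
  rcases List.eq_nil_or_concat l with rfl | ⟨l, z, rfl⟩
  · simp at hlen
  simp only [List.concat_eq_append] at *
  have hw : w = a := by
    have : (a :: b :: (l ++ [z] ++ [w])).getLast? = some w := by
      rw [show a :: b :: (l ++ [z] ++ [w]) = (a :: b :: (l ++ [z])) ++ [w] from rfl,
        List.getLast?_concat]
    rw [this] at hhl
    simpa using hhl.symm
  subst hw
  rw [show w :: b :: (l ++ [z] ++ [w]) = (w :: b :: (l ++ [z])) ++ [w] from rfl] at hnd hch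
  rw [List.dropLast_concat] at hnd
  have hch : ((w :: b :: (l ++ [z])) ++ [w]).IsChain D.semiAdj := hch
  rw [List.isChain_append] at hch
  obtain ⟨hc1, _, hc2⟩ := hch
  have hzw : D.semiAdj z w := by
    refine hc2 z ?_ w (by simp)
    rw [show w :: b :: (l ++ [z]) = (w :: b :: l) ++ [z] from rfl, List.getLast?_concat]
    rfl
  rw [List.isChain_cons_cons] at hc1
  obtain ⟨hwb, hc1⟩ := hc1
  rw [List.nodup_cons, List.nodup_cons] at hnd
  obtain ⟨hn1, hn2, hn3⟩ := hnd
  have hbz : b ≠ z := by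
    rintro rfl
    exact hn2 (by simp)
  have hwz : w ≠ z := by
    rintro rfl
    exact hn1 (by simp)
  have key : ∀ e ∈ D.edges, (e = (w, b) ∨ e = (b, w)) → False := by
    intro e he hew
    obtain ⟨S, h1, h2, h3⟩ := c.tree e he
    have hA : b ∈ S ↔ z ∈ S := by
      refine chain_inv (b :: (l ++ [z])) b z ?_ hc1 rfl ?_
      · intro x hx y hy hxy
        have hxw : x ≠ w := fun h => hn1 (h ▸ hx)
        have hyw : y ≠ w := fun h => hn1 (h ▸ hy)
        rcases hxy with h | h
        · refine h3 _ h ?_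
          rintro rfl
          rcases hew with hew | hew
          · exact hxw (congrArg Prod.fst hew)
          · exact hyw (congrArg Prod.snd hew)
        · refine (h3 _ h ?_).symm
          rintro rfl
          rcases hew with hew | hew
          · exact hyw (congrArg Prod.fst hew)
          · exact hxw (congrArg Prod.snd hew)
      · rw [show b :: (l ++ [z]) = (b :: l) ++ [z] from rfl, List.getLast?_concat]
    have hB : z ∈ S ↔ w ∈ S := by
      rcases hzw with h | h
      · refine h3 _ h ?_
        rintro rfl
        rcases hew with hew | hew
        · exact hwz (congrArg Prod.fst hew).symm
        · exact hbz (congrArg Prod.fst hew).symm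
      · refine (h3 _ h ?_).symm
        rintro rfl
        rcases hew with hew | hew
        · exact hbz (congrArg Prod.snd hew).symm
        · exact hwz (congrArg Prod.snd hew).symm
    rcases hew with rfl | rfl
    · exact h2 (hA.2 (hB.2 h1))
    · exact h2 (hB.1 (hA.1 h1))
  rcases hwb with h | h
  · exact key _ h (Or.inl rfl)
  · exact key _ h (Or.inr rfl)

theorem conn_of_core {D : DG} {L : Lab} (c : Core D L) : D.WeaklyConnected := by
  have ho := c.ori
  intro a ha b hb
  obtain ⟨G, hG⟩ : ∃ G : SimpleGraph ℕ, G = SimpleGraph.fromRel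
    (fun x y => (x, y) ∈ D.edges) := ⟨_, rfl⟩
  have hadj : ∀ x y, G.Adj x y ↔ x ≠ y ∧ ((x, y) ∈ D.edges ∨ (y, x) ∈ D.edges) := by
    intro x y
    rw [hG, SimpleGraph.fromRel_adj]
  have hr : G.Reachable a b := by
    refine c.conn {x | G.Reachable a x} ?_ a ha b hb (SimpleGraph.Reachable.refl a)
    rintro ⟨x, y⟩ hf
    have hxy : G.Adj x y := (hadj x y).2 ⟨ho.2.1 _ hf, Or.inl hf⟩
    exact ⟨fun h => SimpleGraph.Reachable.trans h hxy.reachable,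
      fun h => SimpleGraph.Reachable.trans h hxy.symm.reachable⟩
  obtain ⟨p, hp⟩ := hr.exists_isPath
  refine ⟨p.support, ⟨p.support_ne_nil, ?_, hp.support_nodup, ?_⟩, ?_, ?_⟩
  · intro x hx
    refine reach_mem (V := (D.verts : Set ℕ)) (G := G) ?_ ha (p.takeUntil x hx).reachable
    intro u v huv
    rcases ((hadj u v).1 huv).2 with h | h
    · exact (ho.1 _ h).2
    · exact (ho.1 _ h).1
  · refine p.isChain_adj_support.imp ?_
    intro x y hxy
    exact ((hadj x y).1 hxy).2
  · cases p <;> simp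
  · rw [List.getLast?_eq_some_getLast p.support_ne_nil, SimpleGraph.Walk.getLast_support]

open Classical in
theorem fromCore {D : DG} {L : Lab} (c : Core D L) : ∃ L', IsLocalCompass D L' := by
  have ho := c.ori
  have hW : ∀ a, ∃ e : ℕ × ℕ, (∃ g ∈ D.edges, g.2 = a) → e ∈ D.edges ∧ e.2 = a := by
    intro a
    by_cases h : ∃ g ∈ D.edges, g.2 = a
    · obtain ⟨g, hg⟩ := h
      exact ⟨g, fun _ => hg⟩
    · exact ⟨(0, 0), fun h' => absurd h' h⟩
  have hE : ∀ a, ∃ e : ℕ × ℕ, (∃ g ∈ D.edges, g.1 = a) → e ∈ D.edges ∧ e.1 = a := by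
    intro a
    by_cases h : ∃ g ∈ D.edges, g.1 = a
    · obtain ⟨g, hg⟩ := h
      exact ⟨g, fun _ => hg⟩
    · exact ⟨(0, 0), fun h' => absurd h' h⟩
  choose wf hwf using hW
  choose ef hef using hE
  obtain ⟨L', hL', hLW, hLE⟩ : ∃ L' : Lab, (∀ a, Inn D a → L' a = L a) ∧
      (∀ a Y, ¬ Inn D a → L' a Y XDir.W = wf a) ∧ (∀ a Y, ¬ Inn D a → L' a Y XDir.E = ef a) := by
    refine ⟨fun a Y X => if Inn D a then L a Y X else pick (wf a) (ef a) X, ?_, ?_, ?_⟩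
    · intro a ha
      funext Y X
      exact if_pos ha
    · intro a Y ha
      exact if_neg ha
    · intro a Y ha
      exact if_neg ha
  refine ⟨L', ho, ?_, conn_of_core c, asemi_of_core c, ⟨?_, ?_⟩, ?_, ?_, ?_⟩
  · intro a ha Y
    rw [isInner_iff ho] at ha
    rw [hL' a ha]
    exact c.prop a ha Y
  · intro e he
    refine ⟨he, fun z hz => ?_⟩
    by_contra hne
    obtain ⟨⟨g1, g2⟩, hg, hg2⟩ := c.fW e he.1 _ hz rfl (fun h => hne (by rw [h]))
    simp only at hg2
    subst hg2
    exact he.2.2 _ hg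
  · intro e he
    refine ⟨he, fun z hz => ?_⟩
    by_contra hne
    obtain ⟨⟨g1, g2⟩, hg, hg2⟩ := c.fE e he.1 _ hz rfl (fun h => hne (by rw [h]))
    simp only at hg2
    subst hg2
    exact he.2.2 _ hg
  · obtain ⟨a, ha⟩ := c.inn
    exact ⟨a, (isInner_iff ho).2 ha⟩
  · intro a hia
    rw [isInner_iff ho] at hia
    rw [hL' a hia]
    have hp' := c.prop
    constructor
    · have := (sep_card D.edges (fun e => e.2 = a) _ _ (hp' a hia _).1 (hp' a hia _).2.1
        (hp' a hia _).1 (hp' a hia _).2.1).2 (c.sW a hia)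
      convert this
    · have := (sep_card D.edges (fun e => e.1 = a) _ _ (hp' a hia _).2.2.1 (hp' a hia _).2.2.2
        (hp' a hia _).2.2.1 (hp' a hia _).2.2.2).2 (c.sE a hia)
      convert this
  · intro l hl
    have hY : ∀ Y, Ydecent L' Y l := by
      rintro Y a b t rfl
      have hch : (a :: b :: t).IsChain (fun a b => (a, b) ∈ D.edges) := hl.2.2.2
      obtain ⟨x, y, t', h1, h2, h3⟩ := chain_rch t a b hch
      have hab : (a, b) ∈ D.edges := by
        rw [List.isChain_cons_cons] at hch
        exact hch.1
      by_cases hia : Inn D a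
      · by_cases hiy : Inn D y
        · rcases c.dec Y (a, b) (x, y) hab h2 h3 hia hiy with h | h
          · left
            rw [hL' a hia]; exact h
          · right
            exact ⟨x, y, t', h1, by rw [hL' y hiy]; exact h⟩
        · right
          refine ⟨x, y, t', h1, ?_⟩
          rw [hLW y Y hiy]
          obtain ⟨h4, h5⟩ := hwf y ⟨_, h2, rfl⟩
          by_contra hne
          obtain ⟨g, hg, hg2⟩ := c.fE _ h2 _ h4 h5.symm (Ne.symm hne)
          exact hiy ⟨⟨_, h2, rfl⟩, ⟨g, hg, hg2⟩⟩
      · left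
        rw [hLE a Y hia]
        obtain ⟨h4, h5⟩ := hef a ⟨_, hab, rfl⟩
        by_contra hne
        obtain ⟨g, hg, hg2⟩ := c.fW _ hab _ h4 h5.symm (Ne.symm hne)
        exact hia ⟨⟨g, hg, hg2⟩, ⟨_, hab, rfl⟩⟩
    exact ⟨hY _, hY _⟩

/-- An oriented graph is a global K-graph iff it is a local K-graph. -/
theorem global_iff_local (D : DG) (hD : D.IsOriented) :
    (∃ G : CTree, IsConstruction G ∧ G.rootGraph = D) ↔
      ∃ L : Lab, IsLocalCompass D L := by
  constructor
  · rintro ⟨G, hG, rfl⟩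
    obtain ⟨L, hL, _⟩ := construction_core hG
    exact fromCore hL
  · rintro ⟨L, hL⟩
    obtain ⟨G, hG, hGD, _⟩ := core_construction _ D L (toCore hL) rfl
    exact ⟨G, hG, hGD⟩

end PluralCuts
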